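/- CK-extension: Let Ω₀ ⊆ ℝ^{p+1} be a domain and f₀ ∈ C^ω(Ω₀, 𝔸) a real analytic function. Then there is a p-symmetric slice domain Ω with Ω₀ ⊂ Ω ⊆ Ω₀* := {x_p + x_q : x_p ∈ Ω₀, x_q ∈ ℝ^q} on which the two series defining CK[f₀] converge normally (locally uniformly), CK[f₀] restricted to Ω₀ equals f₀, and CK[f₀] is a left generalized partial-slice monogenic function on Ω. -/

import Mathlib

open scoped BigOperators
open Filter Topology

namespace GPSM

variable (A : Type*) [NormedAddCommGroup A] [NormedSpace ℝ A] [Mul A] [One A]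

/-- `A` is a real alternative algebra with unit `1`, of finite dimension `d > 1`,
equipped with an anti-involution `conj` (a real-linear map with `(a^c)^c = a`,
`(ab)^c = b^c a^c`, fixing the reals).  The associator is alternating (left/right
alternative laws). -/
structure IsAltStarAlg (conj : A → A) : Prop where
  finDim : FiniteDimensional ℝ A
  one_lt_finrank : 1 < Module.finrank ℝ A
  mul_add' : ∀ a b c : A, a * (b + c) = a * b + a * c
  add_mul' : ∀ a b c : A, (a + b) * c = a * c + b * c
  smul_mul' : ∀ (r : ℝ) (a b : A), (r • a) * b = r • (a * b)
  mul_smul' : ∀ (r : ℝ) (a b : A), a * (r • b) = r • (a * b)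
  one_mul' : ∀ a : A, 1 * a = a
  mul_one' : ∀ a : A, a * 1 = a
  alt_left : ∀ a b : A, a * (a * b) = a * a * b
  alt_right : ∀ a b : A, a * b * b = a * (b * b)
  conj_add : ∀ a b : A, conj (a + b) = conj a + conj b
  conj_smul : ∀ (r : ℝ) (a : A), conj (r • a) = r • conj a
  conj_conj : ∀ a : A, conj (conj a) = a
  conj_mul : ∀ a b : A, conj (a * b) = conj b * conj a
  conj_one : conj 1 = 1

/-- `v 0, v 1, …, v m` is a hypercomplex basis of the hypercomplex subspace
`M = span(v 0, …, v m)` of `A`: `v 0 = 1`, `t(v s) = 0`, `n(v s) = 1`, the `v s`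
anticommute for distinct `s, t ∈ {1,…,m}`, they are linearly independent, and
`M` is contained in the quadratic cone `Q_A`. -/
structure IsHypBasis (conj : A → A) (v : ℕ → A) (m : ℕ) : Prop where
  v_zero : v 0 = 1
  trace_zero : ∀ s, 1 ≤ s → s ≤ m → v s + conj (v s) = 0
  norm_one : ∀ s, 1 ≤ s → s ≤ m → v s * conj (v s) = 1
  anticomm : ∀ s t, 1 ≤ s → s ≤ m → 1 ≤ t → t ≤ m → s ≠ t → v s * v t = -(v t * v s)
  indep : LinearIndependent ℝ (fun i : Fin (m + 1) => v i)
  mem_cone : ∀ x ∈ Submodule.span ℝ (Set.range fun i : Fin (m + 1) => v (i : ℕ)),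
      ∃ tr nr : ℝ, x + conj x = tr • (1 : A) ∧ x * conj x = nr • (1 : A) ∧
        ((∃ r : ℝ, x = r • (1 : A)) ∨ tr ^ 2 < 4 * nr)

variable {A}

/-- Identification of `ℝ^{m+1}` with the hypercomplex subspace `M`:
`(x_0,…,x_m) ↦ Σ x_s • v s`. -/
def emb (v : ℕ → A) (m : ℕ) (x : Fin (m + 1) → ℝ) : A :=
  ∑ s : Fin (m + 1), x s • v (s : ℕ)

/-- First `p+1` coordinates of a point of `M ≅ ℝ^{m+1}`, i.e. the `x_p`-part. -/
def projP (m p : ℕ) (x : Fin (m + 1) → ℝ) : Fin (p + 1) → ℝ := fun s =>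
  if h : (s : ℕ) < m + 1 then x ⟨(s : ℕ), h⟩ else 0

/-- Inclusion `ℝ^{p+1} ⊆ ℝ^{m+1}` (remaining coordinates `0`). -/
def injP (m p : ℕ) (y : Fin (p + 1) → ℝ) : Fin (m + 1) → ℝ := fun s =>
  if h : (s : ℕ) < p + 1 then y ⟨(s : ℕ), h⟩ else 0

/-- The coordinates of `x_q` (last `q = m - p` coordinates of `x`). -/
def xqpart (m p : ℕ) (x : Fin (m + 1) → ℝ) : Fin (m + 1) → ℝ := fun s =>
  if (s : ℕ) ≤ p then 0 else x s

/-- The coordinates of `x_p` inside `ℝ^{m+1}`. -/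
def xppart (m p : ℕ) (x : Fin (m + 1) → ℝ) : Fin (m + 1) → ℝ := fun s =>
  if (s : ℕ) ≤ p then x s else 0

/-- `r = |x_q|`. -/
noncomputable def rad (m p : ℕ) (x : Fin (m + 1) → ℝ) : ℝ :=
  Real.sqrt (∑ s : Fin (m + 1), (xqpart m p x s) ^ 2)

/-- `ω = x_q / |x_q|` (coordinates), `0` when `x_q = 0`. -/
noncomputable def normq (m p : ℕ) (x : Fin (m + 1) → ℝ) : Fin (m + 1) → ℝ :=
  (rad m p x)⁻¹ • xqpart m p x

/-- The reflection `x = x_p + x_q ↦ x_⋄ = x_p - x_q`. -/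
def reflP (m p : ℕ) (x : Fin (m + 1) → ℝ) : Fin (m + 1) → ℝ := fun s =>
  if (s : ℕ) ≤ p then x s else -x s

/-- The sphere `𝕊 = {x_q ∈ span(v_{p+1},…,v_m) : x_q² = -1}`, in coordinates. -/
def Sph (v : ℕ → A) (m p : ℕ) : Set (Fin (m + 1) → ℝ) :=
  {w | (∀ s : Fin (m + 1), (s : ℕ) ≤ p → w s = 0) ∧ emb v m w * emb v m w = -1}

/-- The point `x_p + r ω` of `M ≅ ℝ^{m+1}`. -/
def pt (m p : ℕ) (w : Fin (m + 1) → ℝ) (y : Fin (p + 1) → ℝ) (r : ℝ) :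
    Fin (m + 1) → ℝ :=
  injP m p y + r • w

/-- The slice `Ω_ω ⊆ ℝ^{p+2}` of `Ω` at `ω`. -/
def sliceSet (m p : ℕ) (Ω : Set (Fin (m + 1) → ℝ)) (w : Fin (m + 1) → ℝ) :
    Set ((Fin (p + 1) → ℝ) × ℝ) := {z | pt m p w z.1 z.2 ∈ Ω}

/-- The restriction `f_ω` of `f` to the slice at `ω`, as a function on `ℝ^{p+2}`. -/
def sliceFun (m p : ℕ) (f : (Fin (m + 1) → ℝ) → A) (w : Fin (m + 1) → ℝ) :
    (Fin (p + 1) → ℝ) × ℝ → A := fun z => f (pt m p w z.1 z.2)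

/-- Partial derivative `∂_{x_s}` of a function on `ℝ^{m+1}`. -/
noncomputable def pdF (m : ℕ) (s : Fin (m + 1)) (f : (Fin (m + 1) → ℝ) → A)
    (x : Fin (m + 1) → ℝ) : A := fderiv ℝ f x (Pi.single s 1)

/-- Partial derivative `∂_{x_s}` of a function on `ℝ^{p+1}`. -/
noncomputable def pdP (p : ℕ) (s : Fin (p + 1)) (g : (Fin (p + 1) → ℝ) → A)
    (y : Fin (p + 1) → ℝ) : A := fderiv ℝ g y (Pi.single s 1)

/-- Partial derivative `∂_{x_s}` of a function on `ℝ^{p+2} = ℝ^{p+1} × ℝ`. -/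
noncomputable def pdSx (p : ℕ) (s : Fin (p + 1)) (G : (Fin (p + 1) → ℝ) × ℝ → A)
    (z : (Fin (p + 1) → ℝ) × ℝ) : A := fderiv ℝ G z (Pi.single s 1, 0)

/-- Partial derivative `∂_r` of a function on `ℝ^{p+2} = ℝ^{p+1} × ℝ`. -/
noncomputable def pdSr (p : ℕ) (G : (Fin (p + 1) → ℝ) × ℝ → A)
    (z : (Fin (p + 1) → ℝ) × ℝ) : A := fderiv ℝ G z (0, 1)

/-- Second partial derivative `∂_r²`. -/
noncomputable def pdSr2 (p : ℕ) (G : (Fin (p + 1) → ℝ) × ℝ → A)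
    (z : (Fin (p + 1) → ℝ) × ℝ) : A := pdSr p (pdSr p G) z

/-- The operator `Σ_{lo ≤ s ≤ hi} v_s ∂_{x_s}` on functions on `ℝ^{m+1}`.
`Dop v m 0 p` is `D_{x_p}`, `Dop v m (p+1) m` is `D_{x_q}`, `Dop v m 0 m` is `D_x`. -/
noncomputable def Dop (v : ℕ → A) (m lo hi : ℕ) (f : (Fin (m + 1) → ℝ) → A)
    (x : Fin (m + 1) → ℝ) : A :=
  ∑ s : Fin (m + 1), if lo ≤ (s : ℕ) ∧ (s : ℕ) ≤ hi then v (s : ℕ) * pdF m s f x else 0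

/-- The conjugate operator `∂_{x_0} - Σ_{1 ≤ s ≤ hi} v_s ∂_{x_s}` on functions on
`ℝ^{m+1}`; `Dbarop v m p` is `D̄_{x_p}`, `Dbarop v m m` is `D̄_x`. -/
noncomputable def Dbarop (v : ℕ → A) (m hi : ℕ) (f : (Fin (m + 1) → ℝ) → A)
    (x : Fin (m + 1) → ℝ) : A :=
  pdF m 0 f x -
    ∑ s : Fin (m + 1), if 1 ≤ (s : ℕ) ∧ (s : ℕ) ≤ hi then v (s : ℕ) * pdF m s f x else 0

/-- The operator `D_{x_p} = Σ_{s=0}^p v_s ∂_{x_s}` on functions on `ℝ^{p+1}`. -/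
noncomputable def DopP (v : ℕ → A) (p : ℕ) (g : (Fin (p + 1) → ℝ) → A)
    (y : Fin (p + 1) → ℝ) : A :=
  ∑ s : Fin (p + 1), v (s : ℕ) * pdP p s g y

/-- The operator `D̄_{x_p} = ∂_{x_0} - Σ_{s=1}^p v_s ∂_{x_s}` on functions on `ℝ^{p+1}`. -/
noncomputable def DbaropP (v : ℕ → A) (p : ℕ) (g : (Fin (p + 1) → ℝ) → A)
    (y : Fin (p + 1) → ℝ) : A :=
  pdP p 0 g y - ∑ s : Fin (p + 1), if 1 ≤ (s : ℕ) then v (s : ℕ) * pdP p s g y else 0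

/-- The operator `D_{x_p}` on functions on `ℝ^{p+2} = ℝ^{p+1} × ℝ`. -/
noncomputable def DopSx (v : ℕ → A) (p : ℕ) (G : (Fin (p + 1) → ℝ) × ℝ → A)
    (z : (Fin (p + 1) → ℝ) × ℝ) : A :=
  ∑ s : Fin (p + 1), v (s : ℕ) * pdSx p s G z

/-- The operator `D̄_{x_p}` on functions on `ℝ^{p+2} = ℝ^{p+1} × ℝ`. -/
noncomputable def DbaropSx (v : ℕ → A) (p : ℕ) (G : (Fin (p + 1) → ℝ) × ℝ → A)
    (z : (Fin (p + 1) → ℝ) × ℝ) : A :=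
  pdSx p 0 G z - ∑ s : Fin (p + 1), if 1 ≤ (s : ℕ) then v (s : ℕ) * pdSx p s G z else 0

/-- The Laplacian `Δ_x` on functions on `ℝ^{m+1}`. -/
noncomputable def lapF (m : ℕ) (f : (Fin (m + 1) → ℝ) → A)
    (x : Fin (m + 1) → ℝ) : A :=
  ∑ s : Fin (m + 1), pdF m s (pdF m s f) x

/-- The Laplacian `Δ_{x_p}` on functions on `ℝ^{p+1}`. -/
noncomputable def lapP (p : ℕ) (g : (Fin (p + 1) → ℝ) → A)
    (y : Fin (p + 1) → ℝ) : A :=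
  ∑ s : Fin (p + 1), pdP p s (pdP p s g) y

/-- Iterated Laplacian `Δ_x^k`. -/
noncomputable def lapIterF (m k : ℕ) (f : (Fin (m + 1) → ℝ) → A) :
    (Fin (m + 1) → ℝ) → A :=
  (fun g => lapF m g)^[k] f

/-- Iterated Laplacian `Δ_{x_p}^k`. -/
noncomputable def lapIterP (p k : ℕ) (g : (Fin (p + 1) → ℝ) → A) :
    (Fin (p + 1) → ℝ) → A :=
  (fun h => lapP p h)^[k] g

/-- The Laplacian `Δ_{x'} = Δ_{x_p} + ∂_r²` on functions on `ℝ^{p+2}`. -/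
noncomputable def lapSx (p : ℕ) (G : (Fin (p + 1) → ℝ) × ℝ → A)
    (z : (Fin (p + 1) → ℝ) × ℝ) : A :=
  (∑ s : Fin (p + 1), pdSx p s (pdSx p s G) z) + pdSr2 p G z

/-- The slice Cauchy-Riemann operator `D_ω = D_{x_p} + ω ∂_r` applied to a function
on `ℝ^{p+2}`, where `ω` is given in coordinates by `w`. -/
noncomputable def DomCR (v : ℕ → A) (m p : ℕ) (w : Fin (m + 1) → ℝ)
    (G : (Fin (p + 1) → ℝ) × ℝ → A) (z : (Fin (p + 1) → ℝ) × ℝ) : A :=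
  DopSx v p G z + emb v m w * pdSr p G z

/-- `f` is left generalized partial-slice monogenic (of type `(p, m-p)`) on `Ω`. -/
def GSM (v : ℕ → A) (m p : ℕ) (f : (Fin (m + 1) → ℝ) → A)
    (Ω : Set (Fin (m + 1) → ℝ)) : Prop :=
  ∀ w ∈ Sph v m p, ContDiffOn ℝ 1 (sliceFun m p f w) (sliceSet m p Ω w) ∧
    ∀ z ∈ sliceSet m p Ω w, DomCR v m p w (sliceFun m p f w) z = 0

/-- `Ω` is partially symmetric with respect to `ℝ^{p+1}`. -/
def PSym (v : ℕ → A) (m p : ℕ) (Ω : Set (Fin (m + 1) → ℝ)) : Prop :=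
  ∀ x ∈ Ω, ∀ w ∈ Sph v m p, xppart m p x + rad m p x • w ∈ Ω

/-- `Ω` is a slice domain: a domain meeting `ℝ^{p+1}` all of whose slices are
domains in `ℝ^{p+2}`. -/
def SliceDomain (v : ℕ → A) (m p : ℕ) (Ω : Set (Fin (m + 1) → ℝ)) : Prop :=
  IsOpen Ω ∧ IsConnected Ω ∧ (∃ x ∈ Ω, xqpart m p x = 0) ∧
    ∀ w ∈ Sph v m p, IsConnected (sliceSet m p Ω w)

/-- The reflection `(x_p, r) ↦ (x_p, -r)` of `ℝ^{p+2}`. -/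
def reflD (p : ℕ) (z : (Fin (p + 1) → ℝ) × ℝ) : (Fin (p + 1) → ℝ) × ℝ := (z.1, -z.2)

/-- The p-symmetric completion `Ω_D ⊆ M` of `D ⊆ ℝ^{p+2}`. -/
def OmegaD (v : ℕ → A) (m p : ℕ) (D : Set ((Fin (p + 1) → ℝ) × ℝ)) :
    Set (Fin (m + 1) → ℝ) :=
  {x | ∃ w ∈ Sph v m p, ∃ z ∈ D, x = pt m p w z.1 z.2}

/-- `(F₁, F₂)` satisfies the even-odd (stem function) conditions on `D`. -/
def IsStem (p : ℕ) (D : Set ((Fin (p + 1) → ℝ) × ℝ))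
    (F₁ F₂ : (Fin (p + 1) → ℝ) × ℝ → A) : Prop :=
  ∀ z ∈ D, F₁ (reflD p z) = F₁ z ∧ F₂ (reflD p z) = -F₂ z

/-- `f` is the generalized partial-slice function induced by the stem `(F₁, F₂)`:
`f(x_p + rω) = F₁(x_p, r) + ω F₂(x_p, r)`. -/
def Induced (v : ℕ → A) (m p : ℕ) (D : Set ((Fin (p + 1) → ℝ) × ℝ))
    (F₁ F₂ : (Fin (p + 1) → ℝ) × ℝ → A) (f : (Fin (m + 1) → ℝ) → A) : Prop :=
  ∀ w ∈ Sph v m p, ∀ z ∈ D, f (pt m p w z.1 z.2) = F₁ z + emb v m w * F₂ z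

/-- The generalized Cauchy-Riemann system for the stem `(F₁, F₂)` on `D`. -/
def StemCR (v : ℕ → A) (p : ℕ) (D : Set ((Fin (p + 1) → ℝ) × ℝ))
    (F₁ F₂ : (Fin (p + 1) → ℝ) × ℝ → A) : Prop :=
  ∀ z ∈ D, DopSx v p F₁ z - pdSr p F₂ z = 0 ∧ DbaropSx v p F₂ z + pdSr p F₁ z = 0

/-- `f` is generalized partial-slice regular on `Ω_D`. -/
def MemGSR (v : ℕ → A) (m p : ℕ) (D : Set ((Fin (p + 1) → ℝ) × ℝ))
    (f : (Fin (m + 1) → ℝ) → A) : Prop :=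
  ∃ F₁ F₂ : (Fin (p + 1) → ℝ) × ℝ → A, IsStem p D F₁ F₂ ∧
    ContDiffOn ℝ 1 F₁ D ∧ ContDiffOn ℝ 1 F₂ D ∧
    Induced v m p D F₁ F₂ f ∧ StemCR v p D F₁ F₂

/-- `f` is a generalized partial-slice function on `Ω`. -/
def MemGS (v : ℕ → A) (m p : ℕ) (Ω : Set (Fin (m + 1) → ℝ))
    (f : (Fin (m + 1) → ℝ) → A) : Prop :=
  ∃ F₁ F₂ : (Fin (p + 1) → ℝ) × ℝ → A,
    (∀ z : (Fin (p + 1) → ℝ) × ℝ, F₁ (reflD p z) = F₁ z ∧ F₂ (reflD p z) = -F₂ z) ∧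
    ∀ x ∈ Ω, f x = F₁ (projP m p x, rad m p x) +
      emb v m (normq m p x) * F₂ (projP m p x, rad m p x)

/-- Non-associative power: `a^n` with products taken from the right. -/
def apow (a : A) (n : ℕ) : A := (fun b => a * b)^[n] 1

/-- Partial even part `PE[f](x) = (f(x) + f(x_⋄))/2`. -/
noncomputable def PE (m p : ℕ) (f : (Fin (m + 1) → ℝ) → A)
    (x : Fin (m + 1) → ℝ) : A := (2 : ℝ)⁻¹ • (f x + f (reflP m p x))

/-- Partial odd part `PO[f](x) = (f(x) - f(x_⋄))/2`. -/
noncomputable def PO (m p : ℕ) (f : (Fin (m + 1) → ℝ) → A)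
    (x : Fin (m + 1) → ℝ) : A := (2 : ℝ)⁻¹ • (f x - f (reflP m p x))

/-- `Ω₀* = {x_p + x_q : x_p ∈ Ω₀, x_q ∈ ℝ^q}`. -/
def Omega0star (m p : ℕ) (Ω₀ : Set (Fin (p + 1) → ℝ)) : Set (Fin (m + 1) → ℝ) :=
  {x | projP m p x ∈ Ω₀}

/-- The spherical derivative `f'_s(x) = (1/2) x_q⁻¹ (f(x) - f(x_⋄))`
(using `x_q⁻¹ = -x_q/|x_q|²`). -/
noncomputable def sder (v : ℕ → A) (m p : ℕ) (f : (Fin (m + 1) → ℝ) → A)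
    (x : Fin (m + 1) → ℝ) : A :=
  -(((2 : ℝ) * rad m p x ^ 2)⁻¹) • (emb v m (xqpart m p x) * (f x - f (reflP m p x)))

/-- The spherical Dirac operator
`Γ f = -(1/2) Σ_{p+1 ≤ i,j ≤ m} v_i (v_j (L_{ij} f))`. -/
noncomputable def sphericalGamma (v : ℕ → A) (m p : ℕ) (f : (Fin (m + 1) → ℝ) → A)
    (x : Fin (m + 1) → ℝ) : A :=
  -((2 : ℝ)⁻¹) • ∑ i : Fin (m + 1), ∑ j : Fin (m + 1),
    if p < (i : ℕ) ∧ p < (j : ℕ) then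
      v (i : ℕ) * (v (j : ℕ) * (x i • pdF m j f x - x j • pdF m i f x)) else 0

/-- The slice Cauchy-Riemann operator `D_ω` applied to (the slice restriction of) a
function `f` on `M`, at the point `x` (with `ω = x_q/|x_q|`). -/
noncomputable def DomCRat (v : ℕ → A) (m p : ℕ) (f : (Fin (m + 1) → ℝ) → A)
    (x : Fin (m + 1) → ℝ) : A :=
  DomCR v m p (normq m p x) (sliceFun m p f (normq m p x)) (projP m p x, rad m p x)

/-- `f` is left monogenic on `Ω`: `f ∈ C¹` and `D_x f = 0`. -/
def Monogenic (v : ℕ → A) (m : ℕ) (f : (Fin (m + 1) → ℝ) → A)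
    (Ω : Set (Fin (m + 1) → ℝ)) : Prop :=
  ContDiffOn ℝ 1 f Ω ∧ ∀ x ∈ Ω, Dop v m 0 m f x = 0

/-- `f` is harmonic on `Ω`: `f ∈ C²` and `Δ_x f = 0`. -/
def Harmonic (m : ℕ) (f : (Fin (m + 1) → ℝ) → A)
    (Ω : Set (Fin (m + 1) → ℝ)) : Prop :=
  ContDiffOn ℝ 2 f Ω ∧ ∀ x ∈ Ω, lapF m f x = 0

/-- A family of functions converges normally (locally a summable uniform bound). -/
def NormallyConvOn {E F : Type*} [TopologicalSpace E] [NormedAddCommGroup F]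
    (u : ℕ → E → F) (s : Set E) : Prop :=
  ∀ x ∈ s, ∃ U ∈ nhds x, ∃ c : ℕ → ℝ, Summable c ∧ ∀ k : ℕ, ∀ y ∈ U, ‖u k y‖ ≤ c k

/-- The generalized partial-slice CK-extension
`CK[f₀](x) = Σ_k (r^{2k}/(2k)!)(-Δ_{x_p})^k f₀(x_p)
  + ω Σ_k (r^{2k+1}/(2k+1)!)(-Δ_{x_p})^k (D_{x_p} f₀)(x_p)`. -/
noncomputable def CKe (v : ℕ → A) (m p : ℕ) (f₀ : (Fin (p + 1) → ℝ) → A)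
    (x : Fin (m + 1) → ℝ) : A :=
  (∑' k : ℕ, (((-1 : ℝ) ^ k * rad m p x ^ (2 * k)) / (2 * k).factorial) •
      lapIterP p k f₀ (projP m p x)) +
  emb v m (normq m p x) *
    ∑' k : ℕ, (((-1 : ℝ) ^ k * rad m p x ^ (2 * k + 1)) / (2 * k + 1).factorial) •
      lapIterP p k (DopP v p f₀) (projP m p x)

/-- The coefficient `Γ(q/2)(-1)^k r^{2k} / (2^{2k} k! Γ(k + q/2))`. -/
noncomputable def hgckC (q k : ℕ) (r : ℝ) : ℝ :=
  (Real.Gamma ((q : ℝ) / 2) * (-1) ^ k * r ^ (2 * k)) /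
    (2 ^ (2 * k) * (k.factorial : ℝ) * Real.Gamma ((k : ℝ) + (q : ℝ) / 2))

/-- The coefficient `Γ(q/2)(-1)^k r^{2k} / (2^{2k+1} k! Γ(k + q/2 + 1))`. -/
noncomputable def gckC' (q k : ℕ) (r : ℝ) : ℝ :=
  (Real.Gamma ((q : ℝ) / 2) * (-1) ^ k * r ^ (2 * k)) /
    (2 ^ (2 * k + 1) * (k.factorial : ℝ) * Real.Gamma ((k : ℝ) + (q : ℝ) / 2 + 1))

/-- The coefficient `Γ(q/2 + 1)(-1)^k r^{2k} / (2^{2k} k! Γ(k + q/2 + 1))`. -/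
noncomputable def hgckC' (q k : ℕ) (r : ℝ) : ℝ :=
  (Real.Gamma ((q : ℝ) / 2 + 1) * (-1) ^ k * r ^ (2 * k)) /
    (2 ^ (2 * k) * (k.factorial : ℝ) * Real.Gamma ((k : ℝ) + (q : ℝ) / 2 + 1))

/-- The monogenic generalized CK-extension `GCK[A₀]`. -/
noncomputable def GCKe (v : ℕ → A) (m p : ℕ) (A₀ : (Fin (p + 1) → ℝ) → A)
    (x : Fin (m + 1) → ℝ) : A :=
  (∑' k : ℕ, hgckC (m - p) k (rad m p x) • lapIterP p k A₀ (projP m p x)) +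
  emb v m (xqpart m p x) *
    ∑' k : ℕ, gckC' (m - p) k (rad m p x) • lapIterP p k (DopP v p A₀) (projP m p x)

/-- The harmonic generalized CK-extension `HGCK[A₀, A₁]`. -/
noncomputable def HGCKe (v : ℕ → A) (m p : ℕ) (A₀ A₁ : (Fin (p + 1) → ℝ) → A)
    (x : Fin (m + 1) → ℝ) : A :=
  (∑' k : ℕ, hgckC (m - p) k (rad m p x) • lapIterP p k A₀ (projP m p x)) +
  emb v m (xqpart m p x) *
    ∑' k : ℕ, hgckC' (m - p) k (rad m p x) • lapIterP p k A₁ (projP m p x)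

/-- The operator `(1/r)∂_r`, extended to `r = 0` by its limit `∂_r²` (on even
functions). -/
noncomputable def T1 (p : ℕ) (G : (Fin (p + 1) → ℝ) × ℝ → A) :
    (Fin (p + 1) → ℝ) × ℝ → A := fun z =>
  if z.2 = 0 then pdSr2 p G z else (z.2)⁻¹ • pdSr p G z

/-- The operator `∂_r ∘ (1/r)`, extended to `r = 0` by its limit `(1/2)∂_r²` (on odd
functions). -/
noncomputable def T2 (p : ℕ) (G : (Fin (p + 1) → ℝ) × ℝ → A) :
    (Fin (p + 1) → ℝ) × ℝ → A := fun z =>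
  if z.2 = 0 then (2 : ℝ)⁻¹ • pdSr2 p G z
  else fderiv ℝ (fun t : ℝ => t⁻¹ • G (z.1, t)) z.2 1

/-- `C_q(k) = (q-1)(q-3)⋯(q-2k+1)`, `C_q(0) = 1`. -/
noncomputable def cq (q k : ℕ) : ℝ :=
  ∏ i ∈ Finset.range k, ((q : ℝ) - (2 * (i : ℝ) + 1))

/-- Double factorial. -/
def dfac : ℕ → ℕ
  | 0 => 1
  | 1 => 1
  | n + 2 => (n + 2) * dfac n

/-- The Fueter-Sce constant `γ_q = (-1)^{(q-1)/2} (q-1)!!/(q-2)!!`. -/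
noncomputable def gammaQ (q : ℕ) : ℝ :=
  (-1 : ℝ) ^ ((q - 1) / 2) * (dfac (q - 1) : ℝ) / (dfac (q - 2) : ℝ)

/-!
In the coordinates `(x_p, r)` a function induced by a stem `F = (F₁, F₂)` is slice monogenic as soon
as `∂ᵣ F = T F`, where `T (F₁, F₂) = (-D̄ F₂, D F₁)` is a first order operator with constant
coefficients in the variable `x_p`. Its formal solution with initial value `(f₀, 0)` is
`exp (r T) (f₀, 0) = ∑ⱼ (r ^ j / j!) T ^ j (f₀, 0)`. Left alternativity turns the Clifford relations
of the basis into `T² = -Δ`, so the even and the odd part of this exponential series are the two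
series of `CK[f₀]`. The Cauchy estimates `‖Dⁿ f₀‖ ≤ C Bⁿ n!`, locally uniform in `x_p`, make the
series and its termwise derivative converge for small `r`; the points `(x_p, r)` with this property
contain an open set with symmetric fibres in `r`, whose rotation about `ℝ^{p+1}` is `Ω`.
-/

section CauchyEstimates

open scoped NNReal ENNReal Nat

variable {𝕜 E F : Type*} [NontriviallyNormedField 𝕜]
  [NormedAddCommGroup E] [NormedSpace 𝕜 E] [NormedAddCommGroup F] [NormedSpace 𝕜 F]

theorem exists_nnnorm_changeOrigin_mul_pow_le
    (P : FormalMultilinearSeries 𝕜 E F) {r r' : ℝ≥0} (h : (r + r' : ℝ≥0∞) < P.radius) :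
    ∃ C : ℝ≥0, ∀ u : E, ‖u‖₊ ≤ r → ∀ n, ‖P.changeOrigin u n‖₊ * r' ^ n ≤ C := by
  have hr : (r : ℝ≥0∞) < P.radius := le_self_add.trans_lt h
  have hsum := P.changeOriginSeries_summable_aux₁ h
  refine ⟨∑' s : Σ k l : ℕ, { s : Finset (Fin (k + l)) // s.card = l },
    ‖P (s.1 + s.2.1)‖₊ * r ^ s.2.1 * r' ^ s.1, fun u hu n => ?_⟩
  have hsum_n := P.changeOriginSeries_summable_aux₂ hr n
  have hle : ‖P.changeOrigin u n‖₊ ≤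
      ∑' s : Σ l : ℕ, { s : Finset (Fin (n + l)) // s.card = l }, ‖P (n + s.1)‖₊ * r ^ s.1 := by
    have hterm (s : Σ l : ℕ, { s : Finset (Fin (n + l)) // s.card = l }) :
        ‖P (n + s.1)‖₊ * ‖u‖₊ ^ s.1 ≤ ‖P (n + s.1)‖₊ * r ^ s.1 := by gcongr
    exact (P.nnnorm_changeOrigin_le n ((ENNReal.coe_le_coe.2 hu).trans_lt hr)).trans
      ((NNReal.summable_of_le hterm hsum_n).tsum_le_tsum hterm hsum_n)
  calc ‖P.changeOrigin u n‖₊ * r' ^ n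
      ≤ (∑' s : Σ l : ℕ, { s : Finset (Fin (n + l)) // s.card = l },
          ‖P (n + s.1)‖₊ * r ^ s.1) * r' ^ n := by gcongr
    _ = ∑' s : Σ l : ℕ, { s : Finset (Fin (n + l)) // s.card = l },
          ‖P (n + s.1)‖₊ * r ^ s.1 * r' ^ n := (NNReal.tsum_mul_right _ _).symm
    _ ≤ _ := NNReal.tsum_comp_le_tsum_of_inj hsum (i := Sigma.mk n) sigma_mk_injective

theorem norm_iteratedFDeriv_le_of_hasFPowerSeriesOnBall [CompleteSpace F]
    {f : E → F} {P : FormalMultilinearSeries 𝕜 E F} {x : E} {R : ℝ≥0∞}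
    (h : HasFPowerSeriesOnBall f P x R) (n : ℕ) :
    ‖iteratedFDeriv 𝕜 n f x‖ ≤ n ! * ‖P n‖ := by
  refine ContinuousMultilinearMap.opNorm_le_bound (by positivity) fun w => ?_
  have hterm (σ : Equiv.Perm (Fin n)) : ‖P n fun i => w (σ i)‖ ≤ ‖P n‖ * ∏ i, ‖w i‖ := by
    simpa only [Equiv.prod_comp σ fun i => ‖w i‖] using (P n).le_opNorm fun i => w (σ i)
  rw [h.iteratedFDeriv_eq_sum_of_completeSpace]
  calc ‖∑ σ : Equiv.Perm (Fin n), P n fun i => w (σ i)‖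
      ≤ ∑ _σ : Equiv.Perm (Fin n), ‖P n‖ * ∏ i, ‖w i‖ := norm_sum_le_of_le _ fun σ _ => hterm σ
    _ = n ! * ‖P n‖ * ∏ i, ‖w i‖ := by simp [Fintype.card_perm, mul_assoc]

theorem exists_norm_iteratedFDeriv_le_of_analyticAt [CompleteSpace F] {f : E → F} {x : E}
    (h : AnalyticAt 𝕜 f x) :
    ∃ C B : ℝ, 0 ≤ C ∧ 0 < B ∧ ∀ᶠ y in 𝓝 x, ∀ n, ‖iteratedFDeriv 𝕜 n f y‖ ≤ C * B ^ n * n ! := by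
  obtain ⟨P, R, hP⟩ := h
  obtain ⟨r, hr0, hrR⟩ := ENNReal.lt_iff_exists_nnreal_btwn.1 hP.r_pos
  have hr0 : 0 < r / 2 := half_pos (by simpa using hr0)
  have hrP : ((r / 2 : ℝ≥0) + (r / 2 : ℝ≥0) : ℝ≥0∞) < P.radius := by
    rw [← ENNReal.coe_add, add_halves]
    exact hrR.trans_le hP.r_le
  obtain ⟨C, hC⟩ := exists_nnnorm_changeOrigin_mul_pow_le P hrP
  refine ⟨C, ((r / 2 : ℝ≥0) : ℝ)⁻¹, C.2, by positivity, ?_⟩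
  filter_upwards [Metric.ball_mem_nhds x hr0] with y hy n
  have hyr : ‖y - x‖₊ < r / 2 := by exact_mod_cast mem_ball_iff_norm.1 hy
  have hyR : (‖y - x‖₊ : ℝ≥0∞) < R :=
    (ENNReal.coe_lt_coe.2 (hyr.trans_le (half_le_self r.2))).trans hrR
  have hQ := hP.changeOrigin hyR
  rw [add_sub_cancel] at hQ
  have hCn : ‖P.changeOrigin (y - x) n‖ * ((r / 2 : ℝ≥0) : ℝ) ^ n ≤ C :=
    mod_cast hC (y - x) hyr.le n
  calc ‖iteratedFDeriv 𝕜 n f y‖ ≤ n ! * ‖P.changeOrigin (y - x) n‖ :=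
        norm_iteratedFDeriv_le_of_hasFPowerSeriesOnBall hQ n
    _ ≤ n ! * (C * ((r / 2 : ℝ≥0) : ℝ)⁻¹ ^ n) := by
        gcongr
        rwa [inv_pow, le_mul_inv_iff₀ (by positivity)]
    _ = C * ((r / 2 : ℝ≥0) : ℝ)⁻¹ ^ n * n ! := by ring

end CauchyEstimates

section ConstCoeffOp

variable {E F G : Type*} [NormedAddCommGroup E] [NormedSpace ℝ E] [NormedAddCommGroup F]
  [NormedSpace ℝ F] [NormedAddCommGroup G] [NormedSpace ℝ G]

/-- The homogeneous first order differential operator `u ↦ Λ (Du)` with constant coefficients,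
encoded by its symbol `Λ` acting on the total derivative. -/
noncomputable def constCoeffOp (Λ : (E →L[ℝ] F) →L[ℝ] G) (u : E → F) (y : E) : G :=
  Λ (fderiv ℝ u y)

theorem constCoeffOp_congr (Λ : (E →L[ℝ] F) →L[ℝ] G) {u w : E → F} {y : E} (h : u =ᶠ[𝓝 y] w) :
    constCoeffOp Λ u =ᶠ[𝓝 y] constCoeffOp Λ w :=
  h.fderiv.fun_comp Λ

theorem analyticAt_constCoeffOp [CompleteSpace F] (Λ : (E →L[ℝ] F) →L[ℝ] G) {u : E → F} {y : E}
    (hu : AnalyticAt ℝ u y) : AnalyticAt ℝ (constCoeffOp Λ u) y :=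
  (Λ.analyticAt _).comp hu.fderiv

theorem norm_iteratedFDeriv_constCoeffOp_le [CompleteSpace F] (Λ : (E →L[ℝ] F) →L[ℝ] G)
    {u : E → F} {y : E} (hu : AnalyticAt ℝ u y) (n : ℕ) :
    ‖iteratedFDeriv ℝ n (constCoeffOp Λ u) y‖ ≤ ‖Λ‖ * ‖iteratedFDeriv ℝ (n + 1) u y‖ := by
  rw [← norm_iteratedFDeriv_fderiv]
  exact Λ.norm_iteratedFDeriv_comp_left (hu.fderiv.contDiffAt (n := n)) le_rfl

variable [CompleteSpace F] (Λ : (E →L[ℝ] F) →L[ℝ] F) {u : E → F} {y : E}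

theorem analyticAt_iterate_constCoeffOp (hu : AnalyticAt ℝ u y) (j : ℕ) :
    AnalyticAt ℝ ((constCoeffOp Λ)^[j] u) y :=
  Function.Iterate.rec (fun w => AnalyticAt ℝ w y) hu (fun _ => analyticAt_constCoeffOp Λ) j

theorem norm_iteratedFDeriv_iterate_constCoeffOp_le (hu : AnalyticAt ℝ u y) (n j : ℕ) :
    ‖iteratedFDeriv ℝ n ((constCoeffOp Λ)^[j] u) y‖ ≤
      ‖Λ‖ ^ j * ‖iteratedFDeriv ℝ (n + j) u y‖ := by
  induction j generalizing n with
  | zero => simp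
  | succ j ih =>
    rw [Function.iterate_succ_apply']
    calc _ ≤ ‖Λ‖ * ‖iteratedFDeriv ℝ (n + 1) ((constCoeffOp Λ)^[j] u) y‖ :=
          norm_iteratedFDeriv_constCoeffOp_le Λ (analyticAt_iterate_constCoeffOp Λ hu j) n
      _ ≤ ‖Λ‖ * (‖Λ‖ ^ j * ‖iteratedFDeriv ℝ (n + 1 + j) u y‖) := by gcongr; exact ih (n + 1)
      _ = ‖Λ‖ ^ (j + 1) * ‖iteratedFDeriv ℝ (n + (j + 1)) u y‖ := by
          rw [pow_succ', mul_assoc, Nat.add_right_comm n 1 j, Nat.add_assoc n j 1]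

end ConstCoeffOp

theorem contDiffAt_one_tsum_and_hasSum_fderiv {ι E F : Type*} [NormedAddCommGroup E]
    [NormedSpace ℝ E] [NormedAddCommGroup F] [NormedSpace ℝ F] [CompleteSpace F]
    {f : ι → E → F} {c : ι → ℝ} {x : E} (hc : Summable c)
    (h : ∀ᶠ z in 𝓝 x, ∀ i, ContDiffAt ℝ 1 (f i) z ∧ ‖f i z‖ ≤ c i ∧ ‖fderiv ℝ (f i) z‖ ≤ c i) :
    ContDiffAt ℝ 1 (fun z => ∑' i, f i z) x ∧
      HasSum (fun i => fderiv ℝ (f i) x) (fderiv ℝ (fun z => ∑' i, f i z) x) := by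
  obtain ⟨ε, hε, hball⟩ := Metric.eventually_nhds_iff_ball.1 h
  have hx := Metric.mem_ball_self (x := x) hε
  have hderiv : ∀ z ∈ Metric.ball x ε,
      HasFDerivAt (fun z => ∑' i, f i z) (∑' i, fderiv ℝ (f i) z) z := fun z hz =>
    hasFDerivAt_tsum_of_isPreconnected hc Metric.isOpen_ball (convex_ball x ε).isPreconnected
      (fun i z hz => ((hball z hz i).1.differentiableAt one_ne_zero).hasFDerivAt)
      (fun i z hz => (hball z hz i).2.2) hx
      (.of_norm_bounded hc fun i => (hball x hx i).2.1) hz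
  have hcont : ContinuousOn (fun z => ∑' i, fderiv ℝ (f i) z) (Metric.ball x ε) :=
    continuousOn_tsum
      (fun i z hz => ((hball z hz i).1.continuousAt_fderiv one_ne_zero).continuousWithinAt) hc
      fun i z hz => (hball z hz i).2.2
  refine ⟨contDiffAt_one_iff.2 ⟨_, _, Metric.ball_mem_nhds x hε, hcont, hderiv⟩, ?_⟩
  rw [(hderiv x hx).fderiv]
  exact (Summable.of_norm_bounded hc fun i => (hball x hx i).2.2).hasSum

section CauchySeries

open scoped Nat

variable {E F : Type*} [NormedAddCommGroup E] [NormedSpace ℝ E] [NormedAddCommGroup F]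
  [NormedSpace ℝ F] (Λ : (E →L[ℝ] F) →L[ℝ] F) (u : E → F)

/-- The `j`-th term `(r ^ j / j!) T ^ j u` of the formal solution `exp (r T) u` of the Cauchy
problem `∂ᵣ U = T U`, `U (·, 0) = u`, where `T = constCoeffOp Λ`. -/
noncomputable def cauchyTerm (j : ℕ) (z : E × ℝ) : F :=
  (z.2 ^ j / j !) • (constCoeffOp Λ)^[j] u z.1

/-- The Cauchy–Kovalevskaya solution `exp (r T) u` of `∂ᵣ U = T U`, `U (·, 0) = u`, where
`T = constCoeffOp Λ`. -/
noncomputable def cauchySeries (z : E × ℝ) : F := ∑' j, cauchyTerm Λ u j z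

variable [CompleteSpace F] {u}

theorem analyticAt_cauchyTerm {z : E × ℝ} (hu : AnalyticAt ℝ u z.1) (j : ℕ) :
    AnalyticAt ℝ (cauchyTerm Λ u j) z :=
  ((analyticAt_snd.pow j).div_const).smul
    ((analyticAt_iterate_constCoeffOp Λ hu j).comp analyticAt_fst)

theorem hasFDerivAt_cauchyTerm {z : E × ℝ} (hu : AnalyticAt ℝ u z.1) (j : ℕ) :
    HasFDerivAt (cauchyTerm Λ u j)
      ((z.2 ^ j / j !) • (fderiv ℝ ((constCoeffOp Λ)^[j] u) z.1).comp (.fst ℝ E ℝ) +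
        ((j * z.2 ^ (j - 1) / j !) • ContinuousLinearMap.snd ℝ E ℝ).smulRight
          ((constCoeffOp Λ)^[j] u z.1)) z := by
  have hcoeff : HasFDerivAt (fun z : E × ℝ => z.2 ^ j / (j ! : ℝ))
      ((j * z.2 ^ (j - 1) / j !) • ContinuousLinearMap.snd ℝ E ℝ) z :=
    ((hasDerivAt_pow j z.2).div_const _).comp_hasFDerivAt z hasFDerivAt_snd
  exact hcoeff.smul ((analyticAt_iterate_constCoeffOp Λ hu j).differentiableAt.hasFDerivAt.comp z
    hasFDerivAt_fst)

theorem fderiv_cauchyTerm_zero_inr {z : E × ℝ} (hu : AnalyticAt ℝ u z.1) :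
    fderiv ℝ (cauchyTerm Λ u 0) z (0, 1) = 0 := by
  simp [(hasFDerivAt_cauchyTerm Λ hu 0).fderiv]

theorem fderiv_cauchyTerm_succ_inr {z : E × ℝ} (hu : AnalyticAt ℝ u z.1) (j : ℕ) :
    fderiv ℝ (cauchyTerm Λ u (j + 1)) z (0, 1) =
      Λ ((fderiv ℝ (cauchyTerm Λ u j) z).comp (.inl ℝ E ℝ)) := by
  have hcomp : (fderiv ℝ (cauchyTerm Λ u j) z).comp (.inl ℝ E ℝ) =
      (z.2 ^ j / j !) • fderiv ℝ ((constCoeffOp Λ)^[j] u) z.1 := by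
    ext h
    simp [(hasFDerivAt_cauchyTerm Λ hu j).fderiv]
  have hcoeff : ((j + 1 : ℕ) : ℝ) * z.2 ^ (j + 1 - 1) / (j + 1)! = z.2 ^ j / j ! := by
    rw [Nat.add_sub_cancel, Nat.factorial_succ, Nat.cast_mul,
      mul_div_mul_left _ _ (Nat.cast_ne_zero.2 j.succ_ne_zero)]
  rw [hcomp, map_smul, (hasFDerivAt_cauchyTerm Λ hu (j + 1)).fderiv, hcoeff,
    Function.iterate_succ_apply']
  simp [constCoeffOp]

variable {Λ}

theorem norm_cauchyTerm_le {z : E × ℝ} (hu : AnalyticAt ℝ u z.1) {C B : ℝ}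
    (hbound : ∀ n, ‖iteratedFDeriv ℝ n u z.1‖ ≤ C * B ^ n * n !) (j : ℕ) :
    ‖cauchyTerm Λ u j z‖ ≤ C * (|z.2| * ‖Λ‖ * B) ^ j := by
  have h := norm_iteratedFDeriv_iterate_constCoeffOp_le Λ hu 0 j
  rw [norm_iteratedFDeriv_zero, zero_add] at h
  calc ‖cauchyTerm Λ u j z‖ = |z.2| ^ j / j ! * ‖(constCoeffOp Λ)^[j] u z.1‖ := by
        simp [cauchyTerm, norm_smul]
    _ ≤ |z.2| ^ j / j ! * (‖Λ‖ ^ j * (C * B ^ j * j !)) := by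
        gcongr; exact h.trans (by gcongr; exact hbound j)
    _ = C * (|z.2| * ‖Λ‖ * B) ^ j := by
        rw [mul_pow, mul_pow]; field_simp

theorem norm_fderiv_cauchyTerm_le {z : E × ℝ} (hu : AnalyticAt ℝ u z.1) {C B : ℝ}
    (hbound : ∀ n, ‖iteratedFDeriv ℝ n u z.1‖ ≤ C * B ^ n * n !) (j : ℕ) :
    ‖fderiv ℝ (cauchyTerm Λ u j) z‖ ≤
      C * B * (j + 1) * (|z.2| * ‖Λ‖ * B) ^ j +
        C * (‖Λ‖ * B) * j * (|z.2| * ‖Λ‖ * B) ^ (j - 1) := by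
  have h₀ := norm_iteratedFDeriv_iterate_constCoeffOp_le Λ hu 0 j
  have h₁ := norm_iteratedFDeriv_iterate_constCoeffOp_le Λ hu 1 j
  rw [norm_iteratedFDeriv_zero, zero_add] at h₀
  rw [norm_iteratedFDeriv_one, add_comm] at h₁
  rw [(hasFDerivAt_cauchyTerm Λ hu j).fderiv]
  refine (norm_add_le _ _).trans (add_le_add ?_ ?_)
  · calc _ ≤ |z.2| ^ j / j ! * ‖fderiv ℝ ((constCoeffOp Λ)^[j] u) z.1‖ := by
          rw [norm_smul, norm_div, norm_pow, Real.norm_eq_abs, Real.norm_natCast]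
          gcongr
          exact (ContinuousLinearMap.opNorm_comp_le _ _).trans
            (mul_le_of_le_one_right (norm_nonneg _) (ContinuousLinearMap.norm_fst_le ℝ E ℝ))
      _ ≤ |z.2| ^ j / j ! * (‖Λ‖ ^ j * (C * B ^ (j + 1) * (j + 1)!)) := by
          gcongr; exact h₁.trans (by gcongr; exact hbound (j + 1))
      _ = C * B * (j + 1) * (|z.2| * ‖Λ‖ * B) ^ j := by
          rw [mul_pow, mul_pow, pow_succ, Nat.factorial_succ]; push_cast; field_simp
  · calc _ ≤ j * |z.2| ^ (j - 1) / j ! * ‖(constCoeffOp Λ)^[j] u z.1‖ := by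
          rw [ContinuousLinearMap.norm_smulRight_apply, norm_smul, norm_div, norm_mul, norm_pow,
            Real.norm_natCast, Real.norm_natCast, Real.norm_eq_abs]
          gcongr
          exact mul_le_of_le_one_right (by positivity) (ContinuousLinearMap.norm_snd_le ℝ E ℝ)
      _ ≤ j * |z.2| ^ (j - 1) / j ! * (‖Λ‖ ^ j * (C * B ^ j * j !)) := by
          gcongr; exact h₀.trans (by gcongr; exact hbound j)
      _ = _ := by
          cases j with
          | zero => simp
          | succ j =>
            rw [Nat.add_sub_cancel, mul_pow, mul_pow, pow_succ, pow_succ]; field_simp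

theorem exists_summable_norm_cauchyTerm_le {x : E} (hu : AnalyticAt ℝ u x) :
    ∃ c : ℕ → ℝ, Summable c ∧ ∀ᶠ z in 𝓝 (x, (0 : ℝ)), ∀ j,
      ‖cauchyTerm Λ u j z‖ ≤ c j ∧ ‖fderiv ℝ (cauchyTerm Λ u j) z‖ ≤ c j := by
  obtain ⟨C, B, hC, hB, hbound⟩ := exists_norm_iteratedFDeriv_le_of_analyticAt hu
  have hgeom : Summable fun j : ℕ => ((1 : ℝ) / 2) ^ j := summable_geometric_two
  have hsucc : Summable fun j : ℕ => ((j : ℝ) + 1) * (1 / 2) ^ j := by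
    simpa [add_mul] using
      (summable_pow_mul_geometric_of_norm_lt_one 1 (by norm_num : ‖(1 / 2 : ℝ)‖ < 1)).add hgeom
  have hpred : Summable fun j : ℕ => (j : ℝ) * (1 / 2) ^ (j - 1) :=
    (summable_nat_add_iff 1).1 (by simpa using hsucc)
  have hsmall : ∀ᶠ z : E × ℝ in 𝓝 (x, 0), |z.2| * ‖Λ‖ * B < 1 / 2 :=
    ContinuousAt.eventually_lt (by fun_prop) continuousAt_const (by simp)
  refine ⟨fun j => C * (1 / 2) ^ j + (C * B * (j + 1) * (1 / 2) ^ j +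
    C * (‖Λ‖ * B) * j * (1 / 2) ^ (j - 1)), ?_, ?_⟩
  · simpa only [mul_assoc] using (hgeom.mul_left C).add
      (((hsucc.mul_left B).mul_left C).add (((hpred.mul_left B).mul_left ‖Λ‖).mul_left C))
  · filter_upwards [hsmall, continuousAt_fst.eventually hu.eventually_analyticAt,
      continuousAt_fst.eventually hbound] with z hz hanz hboundz j
    refine ⟨(norm_cauchyTerm_le hanz hboundz j).trans (le_add_of_le_of_nonneg ?_ (by positivity)),
      (norm_fderiv_cauchyTerm_le hanz hboundz j).trans (le_add_of_nonneg_of_le (by positivity) ?_)⟩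
    all_goals gcongr

theorem eventually_contDiffAt_and_fderiv_cauchySeries_eq {x : E} (hu : AnalyticAt ℝ u x) :
    ∀ᶠ z in 𝓝 (x, (0 : ℝ)), ContDiffAt ℝ 1 (cauchySeries Λ u) z ∧
      fderiv ℝ (cauchySeries Λ u) z (0, 1) =
        Λ ((fderiv ℝ (cauchySeries Λ u) z).comp (.inl ℝ E ℝ)) := by
  obtain ⟨c, hc, hbound⟩ := exists_summable_norm_cauchyTerm_le (Λ := Λ) hu
  have han : ∀ᶠ z in 𝓝 (x, (0 : ℝ)), AnalyticAt ℝ u z.1 :=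
    continuousAt_fst.eventually hu.eventually_analyticAt
  filter_upwards [hbound.eventually_nhds, han.eventually_nhds] with z hz hanz
  obtain ⟨hcd, hsum⟩ := contDiffAt_one_tsum_and_hasSum_fderiv hc (hz.and hanz |>.mono
    fun z' hz' j => ⟨(analyticAt_cauchyTerm Λ hz'.2 j).contDiffAt, hz'.1 j⟩)
  refine ⟨hcd, ?_⟩
  have hr : HasSum (fun j => fderiv ℝ (cauchyTerm Λ u j) z (0, 1))
      (fderiv ℝ (cauchySeries Λ u) z (0, 1)) := hsum.mapL (.apply ℝ F ((0 : E), (1 : ℝ)))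
  have hr' := (hasSum_nat_add_iff' 1).2 hr
  simp only [Finset.sum_range_one, fderiv_cauchyTerm_zero_inr Λ hanz.self_of_nhds, sub_zero,
    fderiv_cauchyTerm_succ_inr Λ hanz.self_of_nhds] at hr'
  exact hr'.unique (hsum.mapL (Λ.comp (.precomp F (.inl ℝ E ℝ))))

end CauchySeries

section CliffordFactorization

variable {ι E F G : Type*} [Fintype ι] [NormedAddCommGroup E] [NormedSpace ℝ E]
  [NormedAddCommGroup F] [NormedSpace ℝ F] [NormedAddCommGroup G] [NormedSpace ℝ G]

/-- The symbol of the operator `∑ i, L i ∂_{e i}`. -/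
noncomputable def firstOrderSymbol (e : ι → E) (L : ι → F →L[ℝ] G) : (E →L[ℝ] F) →L[ℝ] G :=
  ∑ i, (L i).comp (.apply ℝ F (e i))

/-- The operator `∑ i, ∂_{e i} ∂_{e i}`, which is the Laplacian when `e` is an orthonormal
basis. -/
noncomputable def sumSqDeriv (e : ι → E) (u : E → F) (y : E) : F :=
  ∑ i, fderiv ℝ (fun z => fderiv ℝ u z (e i)) y (e i)

theorem constCoeffOp_firstOrderSymbol (e : ι → E) (L : ι → F →L[ℝ] G) (u : E → F) (y : E) :
    constCoeffOp (firstOrderSymbol e L) u y = ∑ i, L i (fderiv ℝ u y (e i)) := by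
  simp [constCoeffOp, firstOrderSymbol]

variable [CompleteSpace F] {u : E → F} {y : E}

theorem analyticAt_fderiv_apply (hu : AnalyticAt ℝ u y) (a : E) :
    AnalyticAt ℝ (fun z => fderiv ℝ u z a) y :=
  analyticAt_constCoeffOp (.apply ℝ F a) hu

theorem fderiv_fderiv_apply_comm (hu : AnalyticAt ℝ u y) (a b : E) :
    fderiv ℝ (fun z => fderiv ℝ u z a) y b = fderiv ℝ (fun z => fderiv ℝ u z b) y a := by
  have happly (c : E) : fderiv ℝ (fun z => fderiv ℝ u z c) y =
      (ContinuousLinearMap.apply ℝ F c).comp (fderiv ℝ (fderiv ℝ u) y) :=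
    ((ContinuousLinearMap.apply ℝ F c).hasFDerivAt.comp y
      hu.fderiv.differentiableAt.hasFDerivAt).fderiv
  have hsymm : IsSymmSndFDerivAt ℝ u y :=
    (hu.contDiffAt (n := 2)).isSymmSndFDerivAt (by simp)
  rw [happly, happly]
  exact hsymm b a

theorem analyticAt_sumSqDeriv (e : ι → E) (hu : AnalyticAt ℝ u y) :
    AnalyticAt ℝ (sumSqDeriv e u) y :=
  Finset.analyticAt_fun_sum _ fun i _ =>
    analyticAt_fderiv_apply (analyticAt_fderiv_apply hu (e i)) (e i)

theorem analyticAt_iterate_sumSqDeriv (e : ι → E) (hu : AnalyticAt ℝ u y) (k : ℕ) :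
    AnalyticAt ℝ ((sumSqDeriv e)^[k] u) y :=
  Function.Iterate.rec (fun w => AnalyticAt ℝ w y) hu (fun _ => analyticAt_sumSqDeriv e) k

theorem sumSqDeriv_clm_comp (e : ι → E) (M : F →L[ℝ] G) (hu : AnalyticAt ℝ u y) :
    sumSqDeriv e (M ∘ u) y = M (sumSqDeriv e u y) := by
  have hfst (i : ι) : (fun z => fderiv ℝ (M ∘ u) z (e i)) =ᶠ[𝓝 y]
      M ∘ fun z => fderiv ℝ u z (e i) := by
    filter_upwards [hu.eventually_analyticAt] with z hz
    rw [fderiv_comp z M.differentiableAt hz.differentiableAt, M.fderiv]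
    rfl
  simp only [sumSqDeriv, map_sum]
  refine Finset.sum_congr rfl fun i _ => ?_
  rw [(hfst i).fderiv_eq, fderiv_comp y M.differentiableAt
    (analyticAt_fderiv_apply hu (e i)).differentiableAt, M.fderiv]
  rfl

/-- The cross terms `i ≠ j` cancel in pairs because second derivatives commute. -/
theorem constCoeffOp_firstOrderSymbol_sq [DecidableEq ι] {e : ι → E} {L : ι → F →L[ℝ] F} {c : ℝ}
    (hL : ∀ i j a, L i (L j a) + L j (L i a) = if i = j then (2 * c) • a else 0)
    (hu : AnalyticAt ℝ u y) :
    constCoeffOp (firstOrderSymbol e L) (constCoeffOp (firstOrderSymbol e L) u) y =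
      c • sumSqDeriv e u y := by
  set D : ι → ι → F := fun i j => fderiv ℝ (fun z => fderiv ℝ u z (e i)) y (e j) with hD
  have hsq : constCoeffOp (firstOrderSymbol e L) (constCoeffOp (firstOrderSymbol e L) u) y =
      ∑ i, ∑ j, L i (L j (D j i)) := by
    have hderiv : HasFDerivAt (constCoeffOp (firstOrderSymbol e L) u)
        (∑ j, (L j).comp (fderiv ℝ (fun z => fderiv ℝ u z (e j)) y)) y := by
      simp only [funext (constCoeffOp_firstOrderSymbol e L u)]
      exact HasFDerivAt.fun_sum fun j _ => (L j).hasFDerivAt.comp y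
        (analyticAt_fderiv_apply hu (e j)).differentiableAt.hasFDerivAt
    rw [constCoeffOp_firstOrderSymbol, hderiv.fderiv]
    simp [hD]
  have htwo : (2 : ℝ) • ∑ i, ∑ j, L i (L j (D j i)) = (2 : ℝ) • c • sumSqDeriv e u y := by
    calc (2 : ℝ) • ∑ i, ∑ j, L i (L j (D j i))
        = ∑ i, ∑ j, (L i (L j (D j i)) + L j (L i (D i j))) := by
          rw [two_smul]
          nth_rw 2 [Finset.sum_comm]
          simp only [Finset.sum_add_distrib]
      _ = ∑ i, ∑ j, (L i (L j (D i j)) + L j (L i (D i j))) := by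
          simp only [hD, fun i j => fderiv_fderiv_apply_comm hu (e j) (e i)]
      _ = (2 : ℝ) • c • sumSqDeriv e u y := by
          simp [hL, sumSqDeriv, hD, Finset.smul_sum, smul_smul]
  rw [hsq]
  exact smul_right_injective F two_ne_zero htwo

theorem iterate_two_mul_constCoeffOp_firstOrderSymbol [DecidableEq ι] [CompleteSpace G]
    {e : ι → E} {L : ι → G →L[ℝ] G} {c : ℝ}
    (hL : ∀ i j a, L i (L j a) + L j (L i a) = if i = j then (2 * c) • a else 0)
    (hu : AnalyticAt ℝ u y) (M : F →L[ℝ] G) {w : E → G} (hw : w =ᶠ[𝓝 y] M ∘ u) (k : ℕ) :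
    (constCoeffOp (firstOrderSymbol e L))^[2 * k] w =ᶠ[𝓝 y]
      (c ^ k • M) ∘ (sumSqDeriv e)^[k] u := by
  induction k with
  | zero => simpa using hw
  | succ k ih =>
    have hcongr := constCoeffOp_congr (firstOrderSymbol e L)
      (constCoeffOp_congr (firstOrderSymbol e L) ih)
    simp only [mul_add_one, Function.iterate_succ_apply']
    refine hcongr.trans ?_
    filter_upwards [(analyticAt_iterate_sumSqDeriv e hu k).eventually_analyticAt] with z hz
    rw [constCoeffOp_firstOrderSymbol_sq hL (((c ^ k • M).analyticAt _).comp hz),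
      sumSqDeriv_clm_comp e _ hz]
    simp [pow_succ', mul_smul]

end CliffordFactorization

theorem emb_single {B : Type*} [NormedAddCommGroup B] [NormedSpace ℝ B] (v : ℕ → B) {m : ℕ}
    (s : Fin (m + 1)) : emb v m (Pi.single s 1) = v s := by
  simp [emb, Pi.single_apply]

namespace IsAltStarAlg

variable {conj : A → A}

/-- The multiplication of a finite-dimensional alternative algebra as a continuous bilinear map;
it supplies the additive rules for `*`, for which `A` carries no ring instance. -/
noncomputable def mulCLM (H : IsAltStarAlg A conj) : A →L[ℝ] A →L[ℝ] A :=
  haveI := H.finDim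
  LinearMap.toContinuousLinearMap (LinearMap.toContinuousLinearMap.toLinearMap ∘ₗ
    LinearMap.mk₂ ℝ (· * ·) H.add_mul' H.smul_mul' H.mul_add' H.mul_smul')

@[simp]
theorem mulCLM_apply (H : IsAltStarAlg A conj) (a b : A) : H.mulCLM a b = a * b := rfl

protected theorem mul_zero (H : IsAltStarAlg A conj) (a : A) : a * 0 = 0 :=
  map_zero (H.mulCLM a)

protected theorem zero_mul (H : IsAltStarAlg A conj) (a : A) : 0 * a = 0 :=
  map_zero (H.mulCLM.flip a)

protected theorem mul_neg (H : IsAltStarAlg A conj) (a b : A) : a * -b = -(a * b) :=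
  map_neg (H.mulCLM a) b

protected theorem neg_mul (H : IsAltStarAlg A conj) (a b : A) : -a * b = -(a * b) :=
  map_neg (H.mulCLM.flip b) a

protected theorem mul_sub (H : IsAltStarAlg A conj) (a b c : A) : a * (b - c) = a * b - a * c :=
  map_sub (H.mulCLM a) b c

protected theorem sub_mul (H : IsAltStarAlg A conj) (a b c : A) : (a - b) * c = a * c - b * c :=
  map_sub (H.mulCLM.flip c) a b

protected theorem mul_sum (H : IsAltStarAlg A conj) {ι : Type*} (s : Finset ι) (a : A)
    (b : ι → A) : a * ∑ i ∈ s, b i = ∑ i ∈ s, a * b i :=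
  map_sum (H.mulCLM a) b s

protected theorem sum_mul (H : IsAltStarAlg A conj) {ι : Type*} (s : Finset ι) (a : ι → A)
    (b : A) : (∑ i ∈ s, a i) * b = ∑ i ∈ s, a i * b :=
  map_sum (H.mulCLM.flip b) a s

theorem conj_sum_smul (H : IsAltStarAlg A conj) {ι : Type*} (s : Finset ι) (r : ι → ℝ)
    (a : ι → A) : conj (∑ i ∈ s, r i • a i) = ∑ i ∈ s, r i • conj (a i) := by
  simp only [← H.conj_smul]
  exact map_sum (AddMonoidHom.mk' conj H.conj_add) (fun i => r i • a i) s

theorem one_ne_zero (H : IsAltStarAlg A conj) : (1 : A) ≠ 0 := by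
  intro h
  have := H.finDim
  have := Module.finrank_pos_iff.1 (zero_lt_one.trans H.one_lt_finrank)
  obtain ⟨a, ha⟩ := exists_ne (0 : A)
  exact ha (by rw [← H.mul_one' a, h, H.mul_zero])

theorem mul_mul_add_mul_mul (H : IsAltStarAlg A conj) (x y a : A) :
    x * (y * a) + y * (x * a) = (x * y + y * x) * a := by
  have hsum := H.alt_left (x + y) a
  simp only [H.add_mul', H.mul_add', H.alt_left] at hsum ⊢
  rw [← sub_eq_zero] at hsum ⊢
  rw [← hsum]
  abel

theorem mul_conj_mul_add (H : IsAltStarAlg A conj) {x y : A} {r s : ℝ}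
    (hx : x + conj x = r • (1 : A)) (hy : y + conj y = s • (1 : A)) (a : A) :
    x * (conj y * a) + y * (conj x * a) = (x * conj y + y * conj x) * a := by
  rw [eq_sub_of_add_eq' hx, eq_sub_of_add_eq' hy]
  simp only [H.sub_mul, H.mul_sub, H.add_mul', H.smul_mul', H.mul_smul', H.one_mul', H.mul_one']
  have halt := H.mul_mul_add_mul_mul x y a
  rw [H.add_mul', ← sub_eq_zero] at halt
  rw [← sub_eq_zero, ← neg_eq_zero, ← halt]
  abel

theorem conj_mul_mul_add (H : IsAltStarAlg A conj) {x y : A} {r s : ℝ}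
    (hx : x + conj x = r • (1 : A)) (hy : y + conj y = s • (1 : A)) (a : A) :
    conj x * (y * a) + conj y * (x * a) = (x * conj y + y * conj x) * a := by
  rw [← H.mul_conj_mul_add hx hy, eq_sub_of_add_eq' hx, eq_sub_of_add_eq' hy]
  simp only [H.sub_mul, H.mul_sub, H.smul_mul', H.mul_smul', H.one_mul']
  abel

theorem emb_mul_emb_mul (H : IsAltStarAlg A conj) {v : ℕ → A} {m p : ℕ} {w : Fin (m + 1) → ℝ}
    (hw : w ∈ Sph v m p) (a : A) : emb v m w * (emb v m w * a) = -a := by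
  rw [H.alt_left, hw.2, H.neg_mul, H.one_mul']

end IsAltStarAlg

namespace IsHypBasis

variable {conj : A → A} {v : ℕ → A} {m p : ℕ}

theorem conj_eq_neg (hv : IsHypBasis A conj v m) {s : ℕ} (hs : 1 ≤ s) (hsm : s ≤ m) :
    conj (v s) = -v s :=
  eq_neg_of_add_eq_zero_right (hv.trace_zero s hs hsm)

theorem exists_add_conj_eq (hv : IsHypBasis A conj v m) (x : Fin (m + 1) → ℝ) :
    ∃ r : ℝ, emb v m x + conj (emb v m x) = r • (1 : A) := by
  have hmem : emb v m x ∈ Submodule.span ℝ (Set.range fun i : Fin (m + 1) => v (i : ℕ)) :=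
    Submodule.sum_mem _ fun i _ => Submodule.smul_mem _ _ (Submodule.subset_span ⟨i, rfl⟩)
  obtain ⟨r, -, hr, -⟩ := hv.mem_cone _ hmem
  exact ⟨r, hr⟩

theorem mul_conj_add_mul_conj (hv : IsHypBasis A conj v m) (H : IsAltStarAlg A conj) {s t : ℕ}
    (hs : s ≤ m) (ht : t ≤ m) :
    v s * conj (v t) + v t * conj (v s) = if s = t then (2 : ℝ) • (1 : A) else 0 := by
  rcases Nat.eq_zero_or_pos s with rfl | hs' <;> rcases Nat.eq_zero_or_pos t with rfl | ht'
  · simp [hv.v_zero, H.conj_one, H.mul_one', two_smul]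
  · simp [hv.v_zero, H.conj_one, H.mul_one', H.one_mul', ht'.ne,
      add_comm (conj _), hv.trace_zero t ht' ht]
  · simp [hv.v_zero, H.conj_one, H.mul_one', H.one_mul', hs'.ne', hv.trace_zero s hs' hs]
  · rcases eq_or_ne s t with rfl | hst
    · simp [hv.norm_one s hs' hs, two_smul]
    · simp [hv.conj_eq_neg ht' ht, hv.conj_eq_neg hs' hs, H.mul_neg, hst,
        hv.anticomm s t hs' hs ht' ht hst]

theorem emb_mul_conj_emb_add (hv : IsHypBasis A conj v m) (H : IsAltStarAlg A conj)
    (x y : Fin (m + 1) → ℝ) :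
    emb v m x * conj (emb v m y) + emb v m y * conj (emb v m x) =
      (2 * ∑ s, x s * y s) • (1 : A) := by
  have hexpand (x y : Fin (m + 1) → ℝ) : emb v m x * conj (emb v m y) =
      ∑ s, ∑ t, (x s * y t) • (v s * conj (v t)) := by
    simp only [emb, H.conj_sum_smul, H.sum_mul, H.mul_sum, H.smul_mul', H.mul_smul', smul_smul]
  have hbasis (s t : Fin (m + 1)) : v s * conj (v t) + v t * conj (v s) =
      if s = t then (2 : ℝ) • (1 : A) else 0 := by
    simpa [Fin.ext_iff] using
      hv.mul_conj_add_mul_conj H (Nat.le_of_lt_succ s.2) (Nat.le_of_lt_succ t.2)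
  rw [hexpand, hexpand y x, Finset.sum_comm (f := fun s t => (y s * x t) • _)]
  simp only [← Finset.sum_add_distrib, mul_comm (y _), ← smul_add, hbasis]
  simp [smul_smul, Finset.mul_sum, Finset.sum_smul, mul_comm]

theorem mul_conj_mul_emb_add (hv : IsHypBasis A conj v m) (H : IsAltStarAlg A conj)
    (x y : Fin (m + 1) → ℝ) (a : A) :
    emb v m x * (conj (emb v m y) * a) + emb v m y * (conj (emb v m x) * a) =
      (2 * ∑ s, x s * y s) • a := by
  obtain ⟨r, hr⟩ := hv.exists_add_conj_eq x
  obtain ⟨r', hr'⟩ := hv.exists_add_conj_eq y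
  rw [H.mul_conj_mul_add hr hr', hv.emb_mul_conj_emb_add H, H.smul_mul', H.one_mul']

theorem conj_mul_mul_emb_add (hv : IsHypBasis A conj v m) (H : IsAltStarAlg A conj)
    (x y : Fin (m + 1) → ℝ) (a : A) :
    conj (emb v m x) * (emb v m y * a) + conj (emb v m y) * (emb v m x * a) =
      (2 * ∑ s, x s * y s) • a := by
  obtain ⟨r, hr⟩ := hv.exists_add_conj_eq x
  obtain ⟨r', hr'⟩ := hv.exists_add_conj_eq y
  rw [H.conj_mul_mul_add hr hr', hv.emb_mul_conj_emb_add H, H.smul_mul', H.one_mul']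

theorem conj_emb_eq_neg (hv : IsHypBasis A conj v m) (H : IsAltStarAlg A conj)
    {w : Fin (m + 1) → ℝ} (hw : w 0 = 0) : conj (emb v m w) = -emb v m w := by
  simp only [emb, H.conj_sum_smul, Fin.sum_univ_succ, hw, zero_smul, zero_add,
    ← Finset.sum_neg_distrib]
  refine Finset.sum_congr rfl fun s _ => ?_
  rw [hv.conj_eq_neg (by simp) (by simp), smul_neg]

theorem sum_sq_eq_one (hv : IsHypBasis A conj v m) (H : IsAltStarAlg A conj)
    {w : Fin (m + 1) → ℝ} (hw : w ∈ Sph v m p) : ∑ s, w s ^ 2 = 1 := by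
  have h := hv.emb_mul_conj_emb_add H w w
  rw [hv.conj_emb_eq_neg H (hw.1 0 (Nat.zero_le p)), H.mul_neg, hw.2, neg_neg, ← two_smul ℝ,
    mul_smul] at h
  refine (smul_left_injective ℝ H.one_ne_zero ?_).symm
  simpa [sq] using smul_right_injective A (two_ne_zero (α := ℝ)) h

theorem mul_emb_mul (hv : IsHypBasis A conj v m) (H : IsAltStarAlg A conj)
    {w : Fin (m + 1) → ℝ} (hw : w ∈ Sph v m p) {s : Fin (m + 1)} (hs : (s : ℕ) ≤ p) (a : A) :
    v s * (emb v m w * a) = emb v m w * (conj (v s) * a) := by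
  have h := hv.mul_conj_mul_emb_add H (Pi.single s 1) w a
  rw [emb_single, hv.conj_emb_eq_neg H (hw.1 0 (Nat.zero_le p)), H.neg_mul, H.mul_neg] at h
  have hzero : ∑ i, Pi.single (M := fun _ => ℝ) s 1 i * w i = 0 := by
    simp [Pi.single_apply, hw.1 s hs]
  rw [hzero, mul_zero, zero_smul, neg_add_eq_zero] at h
  exact h

end IsHypBasis

section BalancedNhd

variable {X : Type*} [TopologicalSpace X] {Ω₀ : Set X} {D : Set (X × ℝ)}

/-- `D` is an open neighbourhood of `Ω₀ × {0}` over `Ω₀` whose vertical fibres are intervals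
symmetric about `0`. These are the sets `{(x_p, r) : x_p + rω ∈ Ω}` cut out of a `p`-symmetric slice
domain `Ω` around `Ω₀`. -/
structure IsBalancedNhd (Ω₀ : Set X) (D : Set (X × ℝ)) : Prop where
  isOpen : IsOpen D
  prodMk_zero_mem : ∀ y ∈ Ω₀, (y, 0) ∈ D
  fst_mem : ∀ z ∈ D, z.1 ∈ Ω₀
  mem_of_abs_le : ∀ z ∈ D, ∀ t : ℝ, |t| ≤ |z.2| → (z.1, t) ∈ D

theorem exists_isBalancedNhd (hΩ₀ : IsOpen Ω₀) {P : X × ℝ → Prop}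
    (hP : ∀ y ∈ Ω₀, ∀ᶠ z in 𝓝 (y, (0 : ℝ)), P z) :
    ∃ D, IsBalancedNhd Ω₀ D ∧ ∀ z ∈ D, P z := by
  refine ⟨{z | ∃ U ⊆ Ω₀, IsOpen U ∧ z.1 ∈ U ∧ ∃ ε > |z.2|, ∀ y ∈ U, ∀ t, |t| < ε → P (y, t)},
    ⟨?_, ?_, ?_, ?_⟩, ?_⟩
  · refine isOpen_iff_mem_nhds.2 fun z ⟨U, hUΩ₀, hU, hzU, ε, hε, hbox⟩ => ?_
    have hfst : ∀ᶠ z' in 𝓝 z, z'.1 ∈ U := continuousAt_fst.eventually (hU.mem_nhds hzU)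
    have hsnd : ∀ᶠ z' in 𝓝 z, |z'.2| < ε :=
      continuousAt_snd.abs.eventually_lt continuousAt_const hε
    filter_upwards [hfst, hsnd] with z' hz' hε'
    exact ⟨U, hUΩ₀, hU, hz', ε, hε', hbox⟩
  · intro y hy
    obtain ⟨U, V, hU, hyU, hV, hzero, hUV⟩ := mem_nhds_prod_iff'.1 (hP y hy)
    obtain ⟨ε, hε, hball⟩ := Metric.isOpen_iff.1 hV 0 hzero
    refine ⟨U ∩ Ω₀, Set.inter_subset_right, hU.inter hΩ₀, ⟨hyU, hy⟩, ε, by simpa, ?_⟩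
    exact fun y' hy' t ht => hUV ⟨hy'.1, hball (by simpa using ht)⟩
  · exact fun z ⟨_, hUΩ₀, _, hzU, _⟩ => hUΩ₀ hzU
  · exact fun z ⟨U, hUΩ₀, hU, hzU, ε, hε, hbox⟩ t ht =>
      ⟨U, hUΩ₀, hU, hzU, ε, ht.trans_lt hε, hbox⟩
  · exact fun z ⟨_, _, _, hzU, _, hε, hbox⟩ => hbox z.1 hzU z.2 hε

theorem isConnected_of_forall_exists_isPreconnected {s K : Set X} (hK : IsConnected K)
    (hKs : K ⊆ s)
    (h : ∀ x ∈ s, ∃ t ⊆ s, IsPreconnected t ∧ x ∈ t ∧ (K ∩ t).Nonempty) : IsConnected s := by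
  obtain ⟨y, hy⟩ := hK.nonempty
  refine ⟨⟨y, hKs hy⟩, isPreconnected_of_forall y fun x hx => ?_⟩
  obtain ⟨t, hts, ht, hxt, hKt⟩ := h x hx
  exact ⟨K ∪ t, Set.union_subset hKs hts, .inl hy, .inr hxt, hK.isPreconnected.union' hKt ht⟩

namespace IsBalancedNhd

theorem mk_abs_mem_iff (hD : IsBalancedNhd Ω₀ D) (z : X × ℝ) : (z.1, |z.2|) ∈ D ↔ z ∈ D :=
  ⟨fun h => hD.mem_of_abs_le _ h z.2 (abs_abs z.2).ge,
    fun h => hD.mem_of_abs_le z h |z.2| (abs_abs z.2).le⟩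

theorem isConnected (hD : IsBalancedNhd Ω₀ D) (hΩ₀ : IsConnected Ω₀) : IsConnected D := by
  refine isConnected_of_forall_exists_isPreconnected
    (hΩ₀.image (fun y => (y, (0 : ℝ))) (by fun_prop)) ?_ fun z hz => ?_
  · exact Set.image_subset_iff.2 hD.prodMk_zero_mem
  · refine ⟨{z.1} ×ˢ Set.Icc (-|z.2|) |z.2|, ?_, isPreconnected_singleton.prod isPreconnected_Icc,
      ⟨rfl, abs_le.1 le_rfl⟩, (z.1, 0), ⟨z.1, hD.fst_mem z hz, rfl⟩, rfl, by simp⟩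
    rintro ⟨y, t⟩ ⟨rfl, ht⟩
    exact hD.mem_of_abs_le z hz t (abs_le.2 ht)

end IsBalancedNhd

end BalancedNhd

section Coordinates

variable {m p : ℕ}

theorem projP_pt (hp : p ≤ m) {w : Fin (m + 1) → ℝ}
    (hw : ∀ s : Fin (m + 1), (s : ℕ) ≤ p → w s = 0) (y : Fin (p + 1) → ℝ) (r : ℝ) :
    projP m p (pt m p w y r) = y := by
  ext s
  have hsm : (s : ℕ) < m + 1 := by omega
  have hsp : (s : ℕ) ≤ p := Nat.le_of_lt_succ s.2
  simp [projP, pt, injP, hsm, hsp.not_gt, hw ⟨s, hsm⟩ hsp]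

theorem xqpart_pt {w : Fin (m + 1) → ℝ} (hw : ∀ s : Fin (m + 1), (s : ℕ) ≤ p → w s = 0)
    (y : Fin (p + 1) → ℝ) (r : ℝ) : xqpart m p (pt m p w y r) = r • w := by
  ext s
  by_cases hs : (s : ℕ) ≤ p
  · simp [xqpart, hs, hw s hs]
  · simp [xqpart, hs, pt, injP]

theorem rad_pt {w : Fin (m + 1) → ℝ} (hw : ∀ s : Fin (m + 1), (s : ℕ) ≤ p → w s = 0)
    (y : Fin (p + 1) → ℝ) (r : ℝ) :
    rad m p (pt m p w y r) = |r| * √(∑ s, w s ^ 2) := by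
  simp only [rad, xqpart_pt hw, Pi.smul_apply, smul_eq_mul, mul_pow, ← Finset.mul_sum]
  rw [Real.sqrt_mul (sq_nonneg r), Real.sqrt_sq_eq_abs]

theorem xqpart_of_le (x : Fin (m + 1) → ℝ) (s : Fin (m + 1)) (hs : (s : ℕ) ≤ p) :
    xqpart m p x s = 0 :=
  if_pos hs

theorem xppart_eq_injP_projP (x : Fin (m + 1) → ℝ) :
    xppart m p x = injP m p (projP m p x) := by
  ext s
  simp [xppart, injP, projP, Nat.le_of_lt_succ s.2]

theorem pt_xqpart_projP_one (x : Fin (m + 1) → ℝ) :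
    pt m p (xqpart m p x) (projP m p x) 1 = x := by
  ext s
  by_cases hs : (s : ℕ) ≤ p <;> simp [pt, ← xppart_eq_injP_projP, xppart, xqpart, hs]

theorem pt_zero_right (w : Fin (m + 1) → ℝ) (y : Fin (p + 1) → ℝ) :
    pt m p w y 0 = injP m p y := by
  simp [pt]

theorem projP_injP (hp : p ≤ m) (y : Fin (p + 1) → ℝ) : projP m p (injP m p y) = y := by
  rw [← pt_zero_right 0 y, projP_pt hp (by simp)]

theorem xqpart_injP (y : Fin (p + 1) → ℝ) : xqpart m p (injP m p y) = 0 := by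
  rw [← pt_zero_right 0 y, xqpart_pt (by simp), zero_smul]

theorem rad_injP (y : Fin (p + 1) → ℝ) : rad m p (injP m p y) = 0 := by
  simp [rad, xqpart_injP]

theorem continuous_projP : Continuous (projP m p) := by
  refine continuous_pi fun s => ?_
  unfold projP
  split_ifs <;> fun_prop

theorem continuous_injP : Continuous (injP m p) := by
  refine continuous_pi fun s => ?_
  unfold injP
  split_ifs <;> fun_prop

theorem continuous_rad : Continuous (rad m p) := by
  refine Real.continuous_sqrt.comp (continuous_finsetSum _ fun s _ => Continuous.pow ?_ 2)
  unfold xqpart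
  split_ifs <;> fun_prop

end Coordinates

section SymmCompletion

variable {m p : ℕ} {Ω₀ : Set (Fin (p + 1) → ℝ)} {D : Set ((Fin (p + 1) → ℝ) × ℝ)}

/-- The `p`-symmetric completion of `D ⊆ ℝ^{p+2}`, read off in the coordinates `(x_p, |x_q|)`;
unlike `OmegaD` it does not refer to the basis `v`. -/
def symmCompletion (m p : ℕ) (D : Set ((Fin (p + 1) → ℝ) × ℝ)) : Set (Fin (m + 1) → ℝ) :=
  {x | (projP m p x, rad m p x) ∈ D}

theorem image_injP_subset_symmCompletion (hD : IsBalancedNhd Ω₀ D) (hp : p ≤ m) :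
    injP m p '' Ω₀ ⊆ symmCompletion m p D := by
  rintro _ ⟨y, hy, rfl⟩
  simpa [symmCompletion, projP_injP hp, rad_injP] using hD.prodMk_zero_mem y hy

theorem symmCompletion_subset_omega0star (hD : IsBalancedNhd Ω₀ D) :
    symmCompletion m p D ⊆ Omega0star m p Ω₀ :=
  fun _ hx => hD.fst_mem _ hx

theorem isOpen_symmCompletion (hD : IsOpen D) : IsOpen (symmCompletion m p D) :=
  hD.preimage (continuous_projP.prodMk continuous_rad)

theorem isConnected_symmCompletion (hD : IsBalancedNhd Ω₀ D) (hp : p ≤ m)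
    (hΩ₀ : IsConnected Ω₀) : IsConnected (symmCompletion m p D) := by
  refine isConnected_of_forall_exists_isPreconnected (hΩ₀.image _ continuous_injP.continuousOn)
    (image_injP_subset_symmCompletion hD hp) fun x hx => ?_
  refine ⟨pt m p (xqpart m p x) (projP m p x) '' Set.Icc 0 1, ?_,
    isPreconnected_Icc.image _ (by unfold pt; fun_prop),
    ⟨1, by simp, pt_xqpart_projP_one x⟩, injP m p (projP m p x),
    ⟨projP m p x, hD.fst_mem _ hx, rfl⟩, 0, by simp, pt_zero_right _ _⟩
  rintro _ ⟨t, ht, rfl⟩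
  have hrad : |rad m p (pt m p (xqpart m p x) (projP m p x) t)| ≤ |rad m p x| := by
    rw [rad_pt (xqpart_of_le x), ← rad, abs_mul, abs_abs, abs_of_nonneg ht.1]
    exact mul_le_of_le_one_left (abs_nonneg _) ht.2
  rw [symmCompletion, Set.mem_ofPred_eq, projP_pt hp (xqpart_of_le x)]
  exact hD.mem_of_abs_le _ hx _ hrad

end SymmCompletion

section Sphere

variable {conj : A → A} {v : ℕ → A} {m p : ℕ} {Ω₀ : Set (Fin (p + 1) → ℝ)}
  {D : Set ((Fin (p + 1) → ℝ) × ℝ)} {w : Fin (m + 1) → ℝ}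

theorem IsHypBasis.rad_pt_of_mem_sph (hv : IsHypBasis A conj v m) (H : IsAltStarAlg A conj)
    (hw : w ∈ Sph v m p) (y : Fin (p + 1) → ℝ) (r : ℝ) : rad m p (pt m p w y r) = |r| := by
  rw [rad_pt hw.1, hv.sum_sq_eq_one H hw, Real.sqrt_one, mul_one]

theorem IsHypBasis.sliceSet_symmCompletion (hv : IsHypBasis A conj v m) (H : IsAltStarAlg A conj)
    (hp : p ≤ m) (hD : IsBalancedNhd Ω₀ D) (hw : w ∈ Sph v m p) :
    sliceSet m p (symmCompletion m p D) w = D := by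
  ext z
  simp [sliceSet, symmCompletion, projP_pt hp hw.1, hv.rad_pt_of_mem_sph H hw, hD.mk_abs_mem_iff]

theorem IsHypBasis.pSym_symmCompletion (hv : IsHypBasis A conj v m) (H : IsAltStarAlg A conj)
    (hp : p ≤ m) : PSym v m p (symmCompletion m p D) := by
  intro x hx w hw
  rw [xppart_eq_injP_projP, ← pt, symmCompletion, Set.mem_ofPred_eq, projP_pt hp hw.1,
    hv.rad_pt_of_mem_sph H hw, rad, abs_of_nonneg (Real.sqrt_nonneg _)]
  exact hx

theorem IsHypBasis.sliceDomain_symmCompletion (hv : IsHypBasis A conj v m) (H : IsAltStarAlg A conj)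
    (hp : p ≤ m) (hD : IsBalancedNhd Ω₀ D) (hΩ₀ : IsConnected Ω₀) :
    SliceDomain v m p (symmCompletion m p D) := by
  obtain ⟨y, hy⟩ := hΩ₀.nonempty
  refine ⟨isOpen_symmCompletion hD.isOpen, isConnected_symmCompletion hD hp hΩ₀,
    ⟨injP m p y, image_injP_subset_symmCompletion hD hp ⟨y, hy, rfl⟩, xqpart_injP y⟩,
    fun w hw => ?_⟩
  rw [hv.sliceSet_symmCompletion H hp hD hw]
  exact hD.isConnected hΩ₀

end Sphere

section SliceRegular

variable {conj : A → A} {v : ℕ → A} {m p : ℕ} {w : Fin (m + 1) → ℝ}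
  {D : Set ((Fin (p + 1) → ℝ) × ℝ)} {F₁ F₂ : (Fin (p + 1) → ℝ) × ℝ → A}
  {z : (Fin (p + 1) → ℝ) × ℝ}

theorem IsHypBasis.dbaropSx_eq_sum (hv : IsHypBasis A conj v m) (H : IsAltStarAlg A conj)
    (hp : p ≤ m) (G : (Fin (p + 1) → ℝ) × ℝ → A) (z : (Fin (p + 1) → ℝ) × ℝ) :
    DbaropSx v p G z = ∑ s : Fin (p + 1), conj (v s) * pdSx p s G z := by
  have hconj (s : Fin p) : conj (v (s + 1)) = -v (s + 1) :=
    hv.conj_eq_neg (by simp) (by omega)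
  simp [DbaropSx, Fin.sum_univ_succ, hv.v_zero, H.conj_one, H.one_mul', H.neg_mul, hconj,
    sub_eq_add_neg]

theorem IsHypBasis.domCR_add_emb_mul (hv : IsHypBasis A conj v m) (H : IsAltStarAlg A conj)
    (hp : p ≤ m) (hw : w ∈ Sph v m p) (h₁ : DifferentiableAt ℝ F₁ z)
    (h₂ : DifferentiableAt ℝ F₂ z) :
    DomCR v m p w (fun z => F₁ z + emb v m w * F₂ z) z =
      (DopSx v p F₁ z - pdSr p F₂ z) +
        emb v m w * (DbaropSx v p F₂ z + pdSr p F₁ z) := by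
  have hderiv (h : (Fin (p + 1) → ℝ) × ℝ) :
      fderiv ℝ (fun z => F₁ z + emb v m w * F₂ z) z h =
        fderiv ℝ F₁ z h + emb v m w * fderiv ℝ F₂ z h :=
    DFunLike.congr_fun (h₁.hasFDerivAt.add
      ((H.mulCLM (emb v m w)).hasFDerivAt.comp z h₂.hasFDerivAt)).fderiv h
  have hcomm (s : Fin (p + 1)) (a : A) :
      v s * (emb v m w * a) = emb v m w * (conj (v s) * a) :=
    hv.mul_emb_mul H hw (s := s.castLE (by omega)) (Nat.le_of_lt_succ s.2) a
  simp only [hv.dbaropSx_eq_sum H hp, DomCR, DopSx, pdSx, pdSr, hderiv, H.mul_add', hcomm,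
    H.mul_sum, Finset.sum_add_distrib, H.emb_mul_emb_mul hw]
  abel

theorem IsHypBasis.gsm_of_memGSR (hv : IsHypBasis A conj v m) (H : IsAltStarAlg A conj) (hp : p ≤ m)
    (hD : IsOpen D) {Ω : Set (Fin (m + 1) → ℝ)} (hΩ : ∀ w ∈ Sph v m p, sliceSet m p Ω w = D)
    {f : (Fin (m + 1) → ℝ) → A} (hf : MemGSR v m p D f) : GSM v m p f Ω := by
  obtain ⟨F₁, F₂, -, hF₁, hF₂, hind, hCR⟩ := hf
  intro w hw
  have hslice : Set.EqOn (sliceFun m p f w) (fun z => F₁ z + emb v m w * F₂ z) D := hind w hw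
  rw [hΩ w hw]
  refine ⟨(hF₁.add ((H.mulCLM (emb v m w)).contDiff.comp_contDiffOn hF₂)).congr hslice,
    fun z hz => ?_⟩
  have hdiff {F : (Fin (p + 1) → ℝ) × ℝ → A} (hF : ContDiffOn ℝ 1 F D) :
      DifferentiableAt ℝ F z :=
    (hF.contDiffAt (hD.mem_nhds hz)).differentiableAt one_ne_zero
  have hcongr : DomCR v m p w (sliceFun m p f w) z =
      DomCR v m p w (fun z => F₁ z + emb v m w * F₂ z) z := by
    simp only [DomCR, DopSx, pdSx, pdSr,
      (hslice.eventuallyEq_of_mem (hD.mem_nhds hz)).fderiv_eq]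
  rw [hcongr, hv.domCR_add_emb_mul H hp hw (hdiff hF₁) (hdiff hF₂), (hCR z hz).1, (hCR z hz).2,
    H.mul_zero, add_zero]

theorem IsHypBasis.induced_of_even_of_odd (hv : IsHypBasis A conj v m) (H : IsAltStarAlg A conj)
    (hp : p ≤ m) {f : (Fin (m + 1) → ℝ) → A} (heven : ∀ z, F₁ (reflD p z) = F₁ z)
    (hodd : ∀ z, F₂ (reflD p z) = -F₂ z)
    (hf : ∀ x, f x = F₁ (projP m p x, rad m p x) +
      emb v m (normq m p x) * F₂ (projP m p x, rad m p x)) :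
    Induced v m p D F₁ F₂ f := by
  rintro w hw ⟨y, r⟩ -
  have hneg (r : ℝ) : F₁ (y, -r) = F₁ (y, r) ∧ F₂ (y, -r) = -F₂ (y, r) :=
    ⟨heven (y, r), hodd (y, r)⟩
  simp only [hf, normq, projP_pt hp hw.1, hv.rad_pt_of_mem_sph H hw, xqpart_pt hw.1, smul_smul]
  rcases lt_trichotomy r 0 with hr | rfl | hr
  · have hemb : emb v m (-w) = -emb v m w := by simp [emb]
    simp [abs_of_neg hr, hneg, inv_mul_cancel₀ hr.ne, hemb, H.neg_mul, H.mul_neg]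
  · have : IsAddTorsionFree A := .of_isTorsionFree ℝ A
    have hzero : F₂ (y, 0) = 0 := self_eq_neg.1 (by simpa using (hneg 0).2)
    simp [hzero, H.mul_zero]
  · simp [abs_of_pos hr, inv_mul_cancel₀ hr.ne']

end SliceRegular

theorem NormallyConvOn.comp {E E' F : Type*} [TopologicalSpace E] [TopologicalSpace E']
    [NormedAddCommGroup F] {u : ℕ → E → F} {s : Set E'} {t : Set E} (hu : NormallyConvOn u t)
    {g : E' → E} (hg : Continuous g) (hst : Set.MapsTo g s t) :
    NormallyConvOn (fun k x => u k (g x)) s := by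
  intro x hx
  obtain ⟨U, hU, c, hc, hbound⟩ := hu (g x) (hst hx)
  exact ⟨g ⁻¹' U, hg.continuousAt.preimage_mem_nhds hU, c, hc, fun k y hy => hbound k (g y) hy⟩

theorem NormallyConvOn.of_norm_le_comp {E F G : Type*} [TopologicalSpace E]
    [NormedAddCommGroup F] [NormedAddCommGroup G] {u : ℕ → E → F} {w : ℕ → E → G} {s : Set E}
    (hu : NormallyConvOn u s) {φ : ℕ → ℕ} (hφ : φ.Injective)
    (h : ∀ x ∈ s, ∀ᶠ y in 𝓝 x, ∀ k, ‖w k y‖ ≤ ‖u (φ k) y‖) : NormallyConvOn w s := by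
  intro x hx
  obtain ⟨U, hU, c, hc, hbound⟩ := hu x hx
  exact ⟨_, inter_mem hU (h x hx), c ∘ φ, hc.comp_injective hφ,
    fun k y hy => (hy.2 k).trans (hbound (φ k) y hy.1)⟩

theorem NormallyConvOn.summable {E F : Type*} [TopologicalSpace E] [NormedAddCommGroup F]
    [CompleteSpace F] {u : ℕ → E → F} {s : Set E} (hu : NormallyConvOn u s) {x : E} (hx : x ∈ s) :
    Summable fun k => u k x := by
  obtain ⟨U, hU, c, hc, hbound⟩ := hu x hx
  exact .of_norm_bounded hc fun k => hbound k x (mem_of_mem_nhds hU)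

theorem eventually_normallyConvOn_cauchyTerm {E F : Type*} [NormedAddCommGroup E]
    [NormedSpace ℝ E] [NormedAddCommGroup F] [NormedSpace ℝ F] [CompleteSpace F]
    {Λ : (E →L[ℝ] F) →L[ℝ] F} {u : E → F} {x : E} (hu : AnalyticAt ℝ u x) :
    ∀ᶠ z in 𝓝 (x, (0 : ℝ)), NormallyConvOn (cauchyTerm Λ u) {z} := by
  obtain ⟨c, hc, hbound⟩ := exists_summable_norm_cauchyTerm_le (Λ := Λ) hu
  filter_upwards [hbound.eventually_nhds] with z hz
  rintro _ rfl
  exact ⟨_, hz, c, hc, fun k y hy => (hy k).1⟩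

theorem tsum_even_add_odd_of_summable {F : Type*} [NormedAddCommGroup F] [CompleteSpace F]
    {f : ℕ → F} (hf : Summable f) : ∑' k, f (2 * k) + ∑' k, f (2 * k + 1) = ∑' k, f k := by
  have hdouble := mul_right_injective₀ (two_ne_zero (α := ℕ))
  exact tsum_even_add_odd (hf.comp_injective hdouble)
    (hf.comp_injective ((add_left_injective 1).comp hdouble))

section CKSeries

variable {B : Type*} [NormedAddCommGroup B] [NormedSpace ℝ B] (p i : ℕ)
  (g : (Fin (p + 1) → ℝ) → B)

/-- The `k`-th term of the even (`i = 0`) or odd (`i = 1`) series defining the CK-extension, in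
the coordinates `(x_p, r)`. -/
noncomputable def ckTerm (k : ℕ) (z : (Fin (p + 1) → ℝ) × ℝ) : B :=
  (((-1 : ℝ) ^ k * z.2 ^ (2 * k + i)) / (2 * k + i).factorial) • lapIterP p k g z.1

/-- The even (`i = 0`) or odd (`i = 1`) series defining the CK-extension, in the coordinates
`(x_p, r)`. -/
noncomputable def ckSum (z : (Fin (p + 1) → ℝ) × ℝ) : B := ∑' k, ckTerm p i g k z

theorem ckSum_reflD (z : (Fin (p + 1) → ℝ) × ℝ) :
    ckSum p i g (reflD p z) = (-1 : ℝ) ^ i • ckSum p i g z := by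
  have hneg (k : ℕ) : (-z.2) ^ (2 * k + i) = (-1) ^ i * z.2 ^ (2 * k + i) := by
    rw [neg_pow, pow_add (-1), pow_mul, neg_one_sq, one_pow, one_mul]
  simp only [ckSum, ← tsum_const_smul'', ckTerm, reflD, hneg, smul_smul]
  congr! 3
  ring

theorem ckSum_zero_right (y : Fin (p + 1) → ℝ) : ckSum p 0 g (y, 0) = g y := by
  rw [ckSum, tsum_eq_single 0 fun k hk => by simp [ckTerm, hk]]
  simp [ckTerm, lapIterP]

end CKSeries

theorem IsAltStarAlg.CKe_injP {conj : A → A} (H : IsAltStarAlg A conj) (v : ℕ → A) {m p : ℕ}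
    (hp : p ≤ m) (f₀ : (Fin (p + 1) → ℝ) → A) (y : Fin (p + 1) → ℝ) :
    CKe v m p f₀ (injP m p y) = f₀ y := by
  have hemb : emb v m (normq m p (injP m p y)) = 0 := by simp [normq, xqpart_injP, emb]
  calc CKe v m p f₀ (injP m p y) = ckSum p 0 f₀ (y, 0) := by
        rw [CKe, hemb, H.zero_mul, add_zero, projP_injP hp, rad_injP]; rfl
    _ = f₀ y := ckSum_zero_right p f₀ y

section CauchyRiemannSymbol

variable {conj : A → A}

namespace IsAltStarAlg

/-- The coefficient `(b₁, b₂) ↦ (-a^c b₂, a b₁)` that a basis vector `a` contributes to the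
generalized Cauchy–Riemann system `∂ᵣ(F₁, F₂) = (-D̄ F₂, D F₁)`. -/
noncomputable def cauchyRiemannCLM (H : IsAltStarAlg A conj) (a : A) : A × A →L[ℝ] A × A :=
  (-(H.mulCLM (conj a)).comp (.snd ℝ A A)).prod ((H.mulCLM a).comp (.fst ℝ A A))

/-- The symbol of the operator `(F₁, F₂) ↦ (-D̄ F₂, D F₁)` on functions of `x_p`, so that the
generalized Cauchy–Riemann system for a stem `F` reads `∂ᵣ F = constCoeffOp _ F`. -/
noncomputable def cauchyRiemannSymbol (H : IsAltStarAlg A conj) (v : ℕ → A) (p : ℕ) :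
    ((Fin (p + 1) → ℝ) →L[ℝ] A × A) →L[ℝ] A × A :=
  firstOrderSymbol (fun s => Pi.single s 1) fun s => H.cauchyRiemannCLM (v s)

theorem constCoeffOp_firstOrderSymbol_mulCLM (H : IsAltStarAlg A conj) (v : ℕ → A) (p : ℕ)
    (f : (Fin (p + 1) → ℝ) → A) :
    constCoeffOp (firstOrderSymbol (fun s : Fin (p + 1) => Pi.single s 1) fun s =>
      H.mulCLM (v s)) f = DopP v p f :=
  funext (constCoeffOp_firstOrderSymbol _ _ f)

variable {v : ℕ → A} {p : ℕ} {f : (Fin (p + 1) → ℝ) → A} {y : Fin (p + 1) → ℝ}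

theorem analyticAt_DopP (H : IsAltStarAlg A conj) (hf : AnalyticAt ℝ f y) :
    AnalyticAt ℝ (DopP v p f) y := by
  have := H.finDim
  have := FiniteDimensional.complete ℝ A
  rw [← H.constCoeffOp_firstOrderSymbol_mulCLM]
  exact analyticAt_constCoeffOp _ hf

theorem constCoeffOp_cauchyRiemannSymbol_inl_comp (H : IsAltStarAlg A conj)
    (hf : DifferentiableAt ℝ f y) :
    constCoeffOp (H.cauchyRiemannSymbol v p) (ContinuousLinearMap.inl ℝ A A ∘ f) y =
      ContinuousLinearMap.inr ℝ A A (DopP v p f y) := by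
  rw [cauchyRiemannSymbol, constCoeffOp_firstOrderSymbol,
    ((ContinuousLinearMap.inl ℝ A A).hasFDerivAt.comp y hf.hasFDerivAt).fderiv, DopP, map_sum]
  simp [cauchyRiemannCLM, pdP, H.mul_zero]

end IsAltStarAlg

namespace IsHypBasis

variable {v : ℕ → A} {m p : ℕ}

theorem cauchyRiemannCLM_anticomm (hv : IsHypBasis A conj v m) (H : IsAltStarAlg A conj)
    (hp : p ≤ m) (s t : Fin (p + 1)) (a : A × A) :
    H.cauchyRiemannCLM (v s) (H.cauchyRiemannCLM (v t) a) +
      H.cauchyRiemannCLM (v t) (H.cauchyRiemannCLM (v s) a) =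
        if s = t then (2 * (-1 : ℝ)) • a else 0 := by
  let σ : Fin (p + 1) → Fin (m + 1) → ℝ := fun s => Pi.single (s.castLE (by omega)) 1
  have hσ (s : Fin (p + 1)) : v s = emb v m (σ s) := by simp [σ, emb_single]
  have horth : ∑ i, σ s i * σ t i = if s = t then 1 else 0 := by
    simp [σ, Pi.single_apply, Fin.castLE_inj, eq_comm]
  have h₁ := hv.conj_mul_mul_emb_add H (σ s) (σ t) a.1
  have h₂ := hv.mul_conj_mul_emb_add H (σ s) (σ t) a.2
  rw [horth, ← hσ, ← hσ] at h₁ h₂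
  have hneg : H.cauchyRiemannCLM (v s) (H.cauchyRiemannCLM (v t) a) +
      H.cauchyRiemannCLM (v t) (H.cauchyRiemannCLM (v s) a) =
        -(conj (v s) * (v t * a.1) + conj (v t) * (v s * a.1),
          v s * (conj (v t) * a.2) + v t * (conj (v s) * a.2)) := by
    simp [IsAltStarAlg.cauchyRiemannCLM, H.mul_neg, add_comm]
  rw [hneg, h₁, h₂]
  split_ifs <;> simp [← Prod.smul_mk]

theorem iterate_two_mul_constCoeffOp_cauchyRiemannSymbol (hv : IsHypBasis A conj v m)
    (H : IsAltStarAlg A conj) (hp : p ≤ m) {g : (Fin (p + 1) → ℝ) → A} {y : Fin (p + 1) → ℝ}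
    (hg : AnalyticAt ℝ g y) (M : A →L[ℝ] A × A) {w : (Fin (p + 1) → ℝ) → A × A}
    (hw : w =ᶠ[𝓝 y] M ∘ g) (k : ℕ) :
    (constCoeffOp (H.cauchyRiemannSymbol v p))^[2 * k] w y =
      (-1 : ℝ) ^ k • M (lapIterP p k g y) := by
  have := H.finDim
  have := FiniteDimensional.complete ℝ A
  exact (iterate_two_mul_constCoeffOp_firstOrderSymbol (hv.cauchyRiemannCLM_anticomm H hp)
    hg M hw k).eq_of_nhds

variable {f₀ : (Fin (p + 1) → ℝ) → A} {z : (Fin (p + 1) → ℝ) × ℝ}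

theorem cauchyTerm_two_mul (hv : IsHypBasis A conj v m) (H : IsAltStarAlg A conj) (hp : p ≤ m)
    (hf₀ : AnalyticAt ℝ f₀ z.1) (k : ℕ) :
    cauchyTerm (H.cauchyRiemannSymbol v p) (ContinuousLinearMap.inl ℝ A A ∘ f₀) (2 * k) z =
      (ckTerm p 0 f₀ k z, 0) := by
  rw [cauchyTerm, hv.iterate_two_mul_constCoeffOp_cauchyRiemannSymbol H hp hf₀ _ .rfl, smul_smul,
    div_mul_eq_mul_div, mul_comm (z.2 ^ _)]
  simp [ckTerm]

theorem cauchyTerm_two_mul_add_one (hv : IsHypBasis A conj v m) (H : IsAltStarAlg A conj)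
    (hp : p ≤ m) (hf₀ : AnalyticAt ℝ f₀ z.1) (k : ℕ) :
    cauchyTerm (H.cauchyRiemannSymbol v p) (ContinuousLinearMap.inl ℝ A A ∘ f₀) (2 * k + 1) z =
      (0, ckTerm p 1 (DopP v p f₀) k z) := by
  have := H.finDim
  have := FiniteDimensional.complete ℝ A
  have hfirst : constCoeffOp (H.cauchyRiemannSymbol v p) (ContinuousLinearMap.inl ℝ A A ∘ f₀)
      =ᶠ[𝓝 z.1] ContinuousLinearMap.inr ℝ A A ∘ DopP v p f₀ :=
    hf₀.eventually_analyticAt.mono fun _ hy =>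
      H.constCoeffOp_cauchyRiemannSymbol_inl_comp hy.differentiableAt
  rw [cauchyTerm, Function.iterate_succ_apply,
    hv.iterate_two_mul_constCoeffOp_cauchyRiemannSymbol H hp (H.analyticAt_DopP hf₀) _ hfirst,
    smul_smul, div_mul_eq_mul_div, mul_comm (z.2 ^ _)]
  simp [ckTerm]

end IsHypBasis

end CauchyRiemannSymbol

section CKStem

variable {conj : A → A} {v : ℕ → A} {m p : ℕ} {f₀ : (Fin (p + 1) → ℝ) → A}

/-- The stem function `(F₁, F₂)` of the CK-extension of `f₀`. -/
noncomputable def ckStem (v : ℕ → A) (p : ℕ) (f₀ : (Fin (p + 1) → ℝ) → A)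
    (z : (Fin (p + 1) → ℝ) × ℝ) : A × A :=
  (ckSum p 0 f₀ z, ckSum p 1 (DopP v p f₀) z)

namespace IsHypBasis

theorem cauchySeries_eq_ckStem (hv : IsHypBasis A conj v m) (H : IsAltStarAlg A conj)
    (hp : p ≤ m) {z : (Fin (p + 1) → ℝ) × ℝ} (hf₀ : AnalyticAt ℝ f₀ z.1)
    (hs : Summable fun j => cauchyTerm (H.cauchyRiemannSymbol v p)
      (ContinuousLinearMap.inl ℝ A A ∘ f₀) j z) :
    cauchySeries (H.cauchyRiemannSymbol v p) (ContinuousLinearMap.inl ℝ A A ∘ f₀) z =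
      ckStem v p f₀ z := by
  have hsplit (π : A × A →L[ℝ] A) :
      π (cauchySeries (H.cauchyRiemannSymbol v p) (ContinuousLinearMap.inl ℝ A A ∘ f₀) z) =
        ∑' k, π (ckTerm p 0 f₀ k z, 0) + ∑' k, π (0, ckTerm p 1 (DopP v p f₀) k z) := by
    have := H.finDim
    have := FiniteDimensional.complete ℝ A
    rw [cauchySeries, π.map_tsum hs, ← tsum_even_add_odd_of_summable (π.summable hs)]
    simp only [hv.cauchyTerm_two_mul H hp hf₀, hv.cauchyTerm_two_mul_add_one H hp hf₀]
  ext
  · simpa [ckStem, ckSum] using hsplit (.fst ℝ A A)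
  · simpa [ckStem, ckSum] using hsplit (.snd ℝ A A)

theorem stemCR_of_fderiv_eq (hv : IsHypBasis A conj v m) (H : IsAltStarAlg A conj)
    (hp : p ≤ m) {D : Set ((Fin (p + 1) → ℝ) × ℝ)} {F : (Fin (p + 1) → ℝ) × ℝ → A × A}
    (hF : ∀ z ∈ D, DifferentiableAt ℝ F z)
    (hCR : ∀ z ∈ D, fderiv ℝ F z (0, 1) =
      H.cauchyRiemannSymbol v p ((fderiv ℝ F z).comp (.inl ℝ _ ℝ))) :
    StemCR v p D (fun z => (F z).1) (fun z => (F z).2) := by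
  intro z hz
  have h₁ (h : (Fin (p + 1) → ℝ) × ℝ) :
      fderiv ℝ (fun z => (F z).1) z h = (fderiv ℝ F z h).1 := by
    rw [fderiv.fst (hF z hz)]; rfl
  have h₂ (h : (Fin (p + 1) → ℝ) × ℝ) :
      fderiv ℝ (fun z => (F z).2) z h = (fderiv ℝ F z h).2 := by
    rw [fderiv.snd (hF z hz)]; rfl
  simp only [hv.dbaropSx_eq_sum H hp, DopSx, pdSx, pdSr, h₁, h₂, hCR z hz]
  simp [IsAltStarAlg.cauchyRiemannSymbol, firstOrderSymbol, IsAltStarAlg.cauchyRiemannCLM,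
    Prod.fst_sum, Prod.snd_sum]

theorem eventually_normallyConvOn_ckTerm (hv : IsHypBasis A conj v m) (H : IsAltStarAlg A conj)
    (hp : p ≤ m) {y : Fin (p + 1) → ℝ} (hf₀ : AnalyticAt ℝ f₀ y) :
    ∀ᶠ z in 𝓝 (y, (0 : ℝ)), NormallyConvOn (ckTerm p 0 f₀) {z} ∧
      NormallyConvOn (ckTerm p 1 (DopP v p f₀)) {z} := by
  have := H.finDim
  have := FiniteDimensional.complete ℝ A
  filter_upwards [eventually_normallyConvOn_cauchyTerm (Λ := H.cauchyRiemannSymbol v p)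
      (((ContinuousLinearMap.inl ℝ A A).analyticAt _).comp hf₀),
    continuousAt_fst.eventually hf₀.eventually_analyticAt.eventually_nhds] with z hconv han
  have hnear : ∀ᶠ z' in 𝓝 z, AnalyticAt ℝ f₀ z'.1 := continuousAt_fst.eventually han
  constructor
  · refine hconv.of_norm_le_comp (mul_right_injective₀ (two_ne_zero (α := ℕ))) ?_
    rintro _ rfl
    filter_upwards [hnear] with z' hz' k
    rw [hv.cauchyTerm_two_mul H hp hz']
    exact norm_fst_le (_, _)
  · refine hconv.of_norm_le_comp (φ := (2 * · + 1)) (fun a b (h : _ + 1 = _ + 1) => by omega) ?_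
    rintro _ rfl
    filter_upwards [hnear] with z' hz' k
    rw [hv.cauchyTerm_two_mul_add_one H hp hz']
    exact norm_snd_le (_, _)

theorem eventually_contDiffAt_and_fderiv_ckStem_eq (hv : IsHypBasis A conj v m)
    (H : IsAltStarAlg A conj) (hp : p ≤ m) {y : Fin (p + 1) → ℝ} (hf₀ : AnalyticAt ℝ f₀ y) :
    ∀ᶠ z in 𝓝 (y, (0 : ℝ)), ContDiffAt ℝ 1 (ckStem v p f₀) z ∧
      fderiv ℝ (ckStem v p f₀) z (0, 1) =
        H.cauchyRiemannSymbol v p ((fderiv ℝ (ckStem v p f₀) z).comp (.inl ℝ _ ℝ)) := by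
  have := H.finDim
  have := FiniteDimensional.complete ℝ A
  have hinl : AnalyticAt ℝ (ContinuousLinearMap.inl ℝ A A ∘ f₀) y :=
    ((ContinuousLinearMap.inl ℝ A A).analyticAt _).comp hf₀
  have heq : ∀ᶠ z in 𝓝 (y, (0 : ℝ)), ckStem v p f₀ z =
      cauchySeries (H.cauchyRiemannSymbol v p) (ContinuousLinearMap.inl ℝ A A ∘ f₀) z := by
    filter_upwards [eventually_normallyConvOn_cauchyTerm hinl,
      continuousAt_fst.eventually hf₀.eventually_analyticAt] with z hconv han
    exact (hv.cauchySeries_eq_ckStem H hp han (hconv.summable rfl)).symm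
  filter_upwards [heq.eventually_nhds,
    eventually_contDiffAt_and_fderiv_cauchySeries_eq (Λ := H.cauchyRiemannSymbol v p) hinl]
    with z hz hser
  rw [EventuallyEq.fderiv_eq hz]
  exact ⟨hser.1.congr_of_eventuallyEq hz, hser.2⟩

theorem memGSR_CKe (hv : IsHypBasis A conj v m) (H : IsAltStarAlg A conj) (hp : p ≤ m)
    {D : Set ((Fin (p + 1) → ℝ) × ℝ)}
    (hD : ∀ z ∈ D, ContDiffAt ℝ 1 (ckStem v p f₀) z ∧
      fderiv ℝ (ckStem v p f₀) z (0, 1) =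
        H.cauchyRiemannSymbol v p ((fderiv ℝ (ckStem v p f₀) z).comp (.inl ℝ _ ℝ))) :
    MemGSR v m p D (CKe v m p f₀) := by
  have heven (z) : ckSum p 0 f₀ (reflD p z) = ckSum p 0 f₀ z := by simp [ckSum_reflD]
  have hodd (z) : ckSum p 1 (DopP v p f₀) (reflD p z) = -ckSum p 1 (DopP v p f₀) z := by
    simp [ckSum_reflD]
  exact ⟨ckSum p 0 f₀, ckSum p 1 (DopP v p f₀), fun z _ => ⟨heven z, hodd z⟩,
    fun z hz => (hD z hz).1.fst.contDiffWithinAt, fun z hz => (hD z hz).1.snd.contDiffWithinAt,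
    hv.induced_of_even_of_odd H hp heven hodd fun _ => rfl,
    hv.stemCR_of_fderiv_eq H hp (fun z hz => (hD z hz).1.differentiableAt one_ne_zero)
      fun z hz => (hD z hz).2⟩

end IsHypBasis

end CKStem

/-- **CK-extension.** For a real analytic `f₀ : Ω₀ → 𝔸` on a domain `Ω₀ ⊆ ℝ^{p+1}`,
there is a p-symmetric slice domain `Ω` with `Ω₀ ⊂ Ω ⊆ Ω₀*` on which the two series
defining `CK[f₀]` converge normally, `CK[f₀]` restricts to `f₀` on `Ω₀`, and
`CK[f₀]` is left generalized partial-slice monogenic on `Ω`. -/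
theorem CK_extension
    {A : Type*} [NormedAddCommGroup A] [NormedSpace ℝ A] [Mul A] [One A]
    (conj : A → A) (H : IsAltStarAlg A conj)
    (v : ℕ → A) (m p : ℕ) (hv : IsHypBasis A conj v m) (hp : p < m)
    (Ω₀ : Set (Fin (p + 1) → ℝ)) (hΩ₀ : IsOpen Ω₀) (hΩ₀conn : IsConnected Ω₀)
    (f₀ : (Fin (p + 1) → ℝ) → A) (hf₀ : AnalyticOnNhd ℝ f₀ Ω₀) :
    ∃ Ω : Set (Fin (m + 1) → ℝ),
      PSym v m p Ω ∧ SliceDomain v m p Ω ∧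
      injP m p '' Ω₀ ⊆ Ω ∧ Ω ⊆ Omega0star m p Ω₀ ∧
      NormallyConvOn (fun (k : ℕ) (x : Fin (m + 1) → ℝ) =>
        (((-1 : ℝ) ^ k * rad m p x ^ (2 * k)) / (2 * k).factorial) •
          lapIterP p k f₀ (projP m p x)) Ω ∧
      NormallyConvOn (fun (k : ℕ) (x : Fin (m + 1) → ℝ) =>
        (((-1 : ℝ) ^ k * rad m p x ^ (2 * k + 1)) / (2 * k + 1).factorial) •
          lapIterP p k (DopP v p f₀) (projP m p x)) Ω ∧
      (∀ y ∈ Ω₀, CKe v m p f₀ (injP m p y) = f₀ y) ∧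
      GSM v m p (CKe v m p f₀) Ω := by
  obtain ⟨D, hD, hprop⟩ := exists_isBalancedNhd hΩ₀ fun y hy =>
    (hv.eventually_normallyConvOn_ckTerm H hp.le (hf₀ y hy)).and
      (hv.eventually_contDiffAt_and_fderiv_ckStem_eq H hp.le (hf₀ y hy))
  have hcoords : Continuous fun x => (projP m p x, rad m p x) :=
    continuous_projP.prodMk continuous_rad
  refine ⟨symmCompletion m p D, hv.pSym_symmCompletion H hp.le,
    hv.sliceDomain_symmCompletion H hp.le hD hΩ₀conn, image_injP_subset_symmCompletion hD hp.le,
    symmCompletion_subset_omega0star hD, ?_, ?_, fun y _ => H.CKe_injP v hp.le f₀ y, ?_⟩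
  · exact NormallyConvOn.comp (u := ckTerm p 0 f₀) (fun z hz => (hprop z hz).1.1 z rfl) hcoords
      fun _ hx => hx
  · exact NormallyConvOn.comp (u := ckTerm p 1 (DopP v p f₀))
      (fun z hz => (hprop z hz).1.2 z rfl) hcoords fun _ hx => hx
  · exact hv.gsm_of_memGSR H hp.le hD.isOpen
      (fun w hw => hv.sliceSet_symmCompletion H hp.le hD hw)
      (hv.memGSR_CKe H hp.le fun z hz => (hprop z hz).2)

end GPSM
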